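/- Fix t > 0, l ∈ ℕ, and θ ∈ (0,1]. Let c : [0,t] × ℝˡ → ℝ^{l×l} be measurable with symmetric values satisfying θ|y|² ≤ yᵀc_s(x)y ≤ θ^{-1}|y|² for all s ∈ [0,t], x, y ∈ ℝˡ, such that c_s(·) is of class C¹ for each s with first partial derivatives bounded and Lipschitz continuous in x uniformly over s ∈ [0,t]. Let a : [0,t] × ℝˡ → ℝˡ be measurable, with a_s(·) Lipschitz continuous uniformly over s ∈ [0,t] and sup_{s∈[0,t]} |a_s(0)| < ∞. Let m : [0,t] × ℝˡ → [0,∞) be measurable such that for almost every s, m_s(·) is a probability density on ℝˡ belonging to W^{1,1}_loc(ℝˡ), with ∫₀ᵗ ∫_S |Dm_s(x)|²/m_s(x) dx ds < ∞ for every open ball S ⊂ ℝˡ. Suppose that for some L₁ > 0: ∫₀ᵗ sup_{h ∈ C¹₀(ℝˡ)} ∫_{ℝˡ} ( Dh(x)ᵀ( ½ div(c_s(x) m_s(x)) − a_s(x) m_s(x) ) − ½ Dh(x)ᵀ c_s(x) Dh(x) m_s(x) ) dx ds ≤ L₁, where div(c_s m_s) = (div c_s) m_s + c_s Dm_s is the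 weak (rowwise) divergence. Then there exists L₂ > 0, depending only on L₁, t, θ, and the uniform bounds and Lipschitz constants of a, c and the first derivatives of c, such that ∫₀ᵗ ∫_{ℝˡ} |Dm_s(x)|²/m_s(x) dx ds ≤ L₂. -/

import Mathlib

open MeasureTheory Filter Set Topology RealInnerProductSpace

variable {l : ℕ}

/-- `g` is the weak (Sobolev) gradient of `f` on `ℝˡ`; in particular `f ∈ W^{1,1}_loc`. -/
def HasWeakGrad (f : EuclideanSpace ℝ (Fin l) → ℝ)
    (g : EuclideanSpace ℝ (Fin l) → EuclideanSpace ℝ (Fin l)) : Prop :=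
  LocallyIntegrable f volume ∧ LocallyIntegrable g volume ∧
    ∀ p : EuclideanSpace ℝ (Fin l) → ℝ, ContDiff ℝ (⊤ : ℕ∞) p → HasCompactSupport p →
      ∀ v : EuclideanSpace ℝ (Fin l),
        (∫ x, f x * fderiv ℝ p x v) = - ∫ x, ⟪g x, v⟫ * p x

/-- The rowwise divergence `div c` of an operator-valued (matrix-valued) field `c`. -/
noncomputable def matDiv (c : EuclideanSpace ℝ (Fin l) →
      (EuclideanSpace ℝ (Fin l) →L[ℝ] EuclideanSpace ℝ (Fin l)))
    (x : EuclideanSpace ℝ (Fin l)) : EuclideanSpace ℝ (Fin l) :=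
  ∑ j : Fin l, (fderiv ℝ c x (EuclideanSpace.single j (1 : ℝ)))
    (EuclideanSpace.single j (1 : ℝ))

section Mollification

set_option linter.unusedSectionVars false

open ContinuousLinearMap
open scoped Convolution ContDiff

variable {E F : Type*} [NormedAddCommGroup E] [InnerProductSpace ℝ E] [FiniteDimensional ℝ E]
  [MeasurableSpace E] [BorelSpace E]

/-- `σ` is an even smooth probability density supported in the closed ball of radius `r`. -/
structure IsMollifier (σ : E → ℝ) (r : ℝ) (μ : Measure E) : Prop where
  contDiff : ContDiff ℝ ∞ σ
  nonneg : ∀ x, 0 ≤ σ x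
  even : ∀ x, σ (-x) = σ x
  integral_eq_one : ∫ x, σ x ∂μ = 1
  eq_zero : ∀ x, r < ‖x‖ → σ x = 0

/-- The mollification `σ * f`. -/
noncomputable def mollify [NormedAddCommGroup F] [NormedSpace ℝ F] (σ : E → ℝ) (μ : Measure E)
    (f : E → F) (x : E) : F :=
  ∫ y, σ (x - y) • f y ∂μ

variable {σ : E → ℝ} {r : ℝ} {μ : Measure E}

theorem ContDiffBump.isMollifier_normed [μ.IsAddHaarMeasure] (φ : ContDiffBump (0 : E)) :
    IsMollifier (φ.normed μ) φ.rOut μ where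
  contDiff := φ.contDiff_normed
  nonneg := φ.nonneg_normed
  even := φ.normed_neg
  integral_eq_one := φ.integral_normed
  eq_zero x hx := by
    rw [← Function.notMem_support, φ.support_normed_eq]
    simpa using hx.le

theorem MeasureTheory.LocallyIntegrable.clm_comp {G : Type*} [NormedAddCommGroup F]
    [NormedSpace ℝ F] [NormedAddCommGroup G] [NormedSpace ℝ G] {f : E → F}
    (hf : LocallyIntegrable f μ) (T : F →L[ℝ] G) : LocallyIntegrable (fun x ↦ T (f x)) μ :=
  fun x ↦ (hf x).imp fun _ hs ↦ ⟨hs.1, T.integrable_comp hs.2⟩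

namespace IsMollifier

theorem hasCompactSupport (h : IsMollifier σ r μ) : HasCompactSupport σ :=
  HasCompactSupport.intro (isCompact_closedBall 0 r) fun x hx ↦ h.eq_zero x (by simpa using hx)

theorem sub_comm (h : IsMollifier σ r μ) (x y : E) : σ (x - y) = σ (y - x) := by
  rw [← h.even, neg_sub]

theorem exists_bound (h : IsMollifier σ r μ) : ∃ C, ∀ x, ‖σ x‖ ≤ C :=
  h.contDiff.continuous.bounded_above_of_compact_support h.hasCompactSupport

variable [μ.IsAddHaarMeasure]

theorem integral_comp_sub (h : IsMollifier σ r μ) (x : E) : ∫ y, σ (x - y) ∂μ = 1 := by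
  rw [integral_sub_left_eq_self (fun y ↦ σ y), h.integral_eq_one]

variable [NormedAddCommGroup F] [NormedSpace ℝ F] {f g : E → F}

theorem integrable_smul (h : IsMollifier σ r μ) (hf : LocallyIntegrable f μ) (x : E) :
    Integrable (fun y ↦ σ (x - y) • f y) μ := by
  refine hf.integrable_smul_left_of_hasCompactSupport
    (h.contDiff.continuous.comp (continuous_const.sub continuous_id)) ?_
  exact h.hasCompactSupport.comp_homeomorph (Homeomorph.subLeft x)

theorem mollify_eq_convolution (σ : E → ℝ) (f : E → F) :
    mollify σ μ f = σ ⋆[lsmul ℝ ℝ, μ] f := by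
  ext x
  rw [convolution_lsmul_swap, mollify]

theorem contDiff_mollify (h : IsMollifier σ r μ) (hf : LocallyIntegrable f μ) :
    ContDiff ℝ ∞ (mollify σ μ f) := by
  rw [mollify_eq_convolution]
  exact h.hasCompactSupport.contDiff_convolution_left _ h.contDiff hf

theorem continuous_mollify (h : IsMollifier σ r μ) (hf : LocallyIntegrable f μ) :
    Continuous (mollify σ μ f) :=
  (h.contDiff_mollify hf).continuous

theorem norm_mollify_le (h : IsMollifier σ r μ) (x : E) :
    ‖mollify σ μ f x‖ ≤ mollify σ μ (fun y ↦ ‖f y‖) x := by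
  refine (norm_integral_le_integral_norm _).trans_eq ?_
  simp [mollify, norm_smul, abs_of_nonneg (h.nonneg _)]

theorem mollify_mono (h : IsMollifier σ r μ) {f g : E → ℝ} (hf : LocallyIntegrable f μ)
    (hg : LocallyIntegrable g μ) (hfg : ∀ᵐ x ∂μ, f x ≤ g x) (x : E) :
    mollify σ μ f x ≤ mollify σ μ g x := by
  refine integral_mono_ae (h.integrable_smul hf x) (h.integrable_smul hg x) ?_
  filter_upwards [hfg] with y hy
  exact mul_le_mul_of_nonneg_left hy (h.nonneg _)

theorem mollify_nonneg (h : IsMollifier σ r μ) {f : E → ℝ} (hf : ∀ x, 0 ≤ f x) (x : E) :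
    0 ≤ mollify σ μ f x :=
  integral_nonneg fun _ ↦ mul_nonneg (h.nonneg _) (hf _)

theorem mollify_add (h : IsMollifier σ r μ) (hf : LocallyIntegrable f μ)
    (hg : LocallyIntegrable g μ) (x : E) :
    mollify σ μ (fun y ↦ f y + g y) x = mollify σ μ f x + mollify σ μ g x := by
  simp only [mollify, smul_add]
  exact integral_add (h.integrable_smul hf x) (h.integrable_smul hg x)

theorem mollify_const_smul (a : ℝ) (f : E → F) (x : E) :
    mollify σ μ (fun y ↦ a • f y) x = a • mollify σ μ f x := by
  simp only [mollify, smul_comm _ a, integral_smul]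

theorem mollify_const_mul (a : ℝ) (f : E → ℝ) (x : E) :
    mollify σ μ (fun y ↦ a * f y) x = a * mollify σ μ f x :=
  mollify_const_smul a f x

theorem mollify_const (h : IsMollifier σ r μ) [CompleteSpace F] (v : F) (x : E) :
    mollify σ μ (fun _ ↦ v) x = v := by
  rw [mollify, integral_smul_const, h.integral_comp_sub, one_smul]

theorem mollify_clm (h : IsMollifier σ r μ) {G : Type*} [NormedAddCommGroup G] [NormedSpace ℝ G]
    [CompleteSpace F] [CompleteSpace G]
    (hf : LocallyIntegrable f μ) (T : F →L[ℝ] G) (x : E) :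
    mollify σ μ (fun y ↦ T (f y)) x = T (mollify σ μ f x) := by
  rw [mollify, mollify, ← T.integral_comp_comm (h.integrable_smul hf x)]
  simp

/-- Mollifying only sees values at distance at most `r`. -/
theorem mollify_congr_of_dist_le (h : IsMollifier σ r μ) {x : E}
    (hfg : ∀ y, dist x y ≤ r → f y = g y) : mollify σ μ f x = mollify σ μ g x := by
  refine integral_congr_ae (Eventually.of_forall fun y ↦ ?_)
  by_cases hy : dist x y ≤ r
  · simp [hfg y hy]
  · have : σ (x - y) = 0 := h.eq_zero _ (by simpa [dist_eq_norm] using hy)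
    simp [this]

theorem hasCompactSupport_mollify (h : IsMollifier σ r μ) (hf : HasCompactSupport f) :
    HasCompactSupport (mollify σ μ f) := by
  rw [mollify_eq_convolution]
  exact h.hasCompactSupport.convolution _ hf

theorem integrable_mollify (h : IsMollifier σ r μ) (hf : Integrable f μ) :
    Integrable (mollify σ μ f) μ := by
  rw [mollify_eq_convolution]
  exact (h.contDiff.continuous.integrable_of_hasCompactSupport
    h.hasCompactSupport).integrable_convolution _ hf

theorem integral_mollify (h : IsMollifier σ r μ) [CompleteSpace F] (hf : Integrable f μ) :
    ∫ x, mollify σ μ f x ∂μ = ∫ x, f x ∂μ := by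
  rw [mollify_eq_convolution, integral_convolution _ (h.contDiff.continuous.integrable_of_hasCompactSupport
    h.hasCompactSupport) hf, h.integral_eq_one]
  simp

theorem setIntegral_mollify_le (h : IsMollifier σ r μ) (hr : r ≤ 1) {f : E → ℝ}
    (hf0 : ∀ x, 0 ≤ f x) (hf : LocallyIntegrable f μ) (R : ℝ) :
    ∫ x in Metric.closedBall 0 R, mollify σ μ f x ∂μ ≤
      ∫ x in Metric.closedBall 0 (R + 1), f x ∂μ := by
  set S' := Metric.closedBall (0 : E) (R + 1) with hS'
  have hi : Integrable (S'.indicator f) μ :=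
    (hf.integrableOn_isCompact (isCompact_closedBall _ _)).integrable_indicator
      measurableSet_closedBall
  rw [← integral_indicator (f := f) measurableSet_closedBall, ← h.integral_mollify hi]
  have h0 : ∀ x, 0 ≤ mollify σ μ (S'.indicator f) x :=
    h.mollify_nonneg fun x ↦ Set.indicator_nonneg (fun x _ ↦ hf0 x) x
  refine le_trans (le_of_eq ?_) (setIntegral_le_integral (s := Metric.closedBall 0 R)
    (h.integrable_mollify hi) (Eventually.of_forall h0))
  refine setIntegral_congr_fun measurableSet_closedBall fun x hx ↦ ?_
  refine h.mollify_congr_of_dist_le fun y hy ↦ ?_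
  rw [Set.indicator_of_mem]
  rw [hS', mem_closedBall_zero_iff]
  rw [mem_closedBall_zero_iff] at hx
  have := norm_le_insert x y
  rw [dist_eq_norm] at hy
  linarith

theorem integral_inner_mollify (h : IsMollifier σ r μ) {F : Type*} [NormedAddCommGroup F]
    [InnerProductSpace ℝ F] [CompleteSpace F]
    {u V : E → F} (hu : Integrable u μ) (hu' : HasCompactSupport u)
    (hV : LocallyIntegrable V μ) :
    ∫ x, ⟪mollify σ μ u x, V x⟫ ∂μ = ∫ y, ⟪u y, mollify σ μ V y⟫ ∂μ := by
  obtain ⟨C, hC⟩ := h.exists_bound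
  obtain ⟨R, hR⟩ := hu'.isCompact.isBounded.subset_closedBall (0 : E)
  have huR : ∀ y, R < ‖y‖ → u y = 0 := fun y hy ↦ by
    by_contra hne
    have := hR (subset_tsupport _ hne)
    rw [mem_closedBall_zero_iff] at this
    linarith
  set S := Metric.closedBall (0 : E) (R + r)
  have hVi : Integrable (S.indicator V) μ :=
    (hV.integrableOn_isCompact (isCompact_closedBall _ _)).integrable_indicator
      measurableSet_closedBall
  have key : Integrable (fun p : E × E ↦ σ (p.1 - p.2) * ⟪u p.2, V p.1⟫) (μ.prod μ) := by
    have h1 : Integrable (fun p : E × E ↦ C * (‖S.indicator V p.1‖ * ‖u p.2‖)) (μ.prod μ) :=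
      (hVi.norm.mul_prod hu.norm).const_mul C
    refine h1.mono ?_ (Eventually.of_forall fun p ↦ ?_)
    · refine AEStronglyMeasurable.mul ?_ (AEStronglyMeasurable.inner ?_ ?_)
      · exact (h.contDiff.continuous.comp
          (continuous_fst.sub continuous_snd)).aestronglyMeasurable
      · exact hu.aestronglyMeasurable.comp_snd
      · exact hV.aestronglyMeasurable.comp_fst
    · by_cases hu0 : u p.2 = 0
      · simp [hu0]
      by_cases hs : r < ‖p.1 - p.2‖
      · rw [h.eq_zero _ hs]
        simp only [zero_mul, norm_zero]
        positivity
      have hp2 : ‖p.2‖ ≤ R := not_lt.1 fun hlt ↦ hu0 (huR _ hlt)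
      have hp1 : p.1 ∈ S := by
        rw [mem_closedBall_zero_iff]
        have := norm_le_insert' p.1 p.2
        linarith
      have hC0 : 0 ≤ C := (norm_nonneg _).trans (hC 0)
      rw [Set.indicator_of_mem hp1, norm_mul, norm_mul, norm_mul, norm_norm, norm_norm,
        Real.norm_of_nonneg hC0]
      have := norm_inner_le_norm (𝕜 := ℝ) (u p.2) (V p.1)
      rw [mul_comm ‖V p.1‖]
      gcongr
      exact hC _
  have e1 : ∀ x, ⟪mollify σ μ u x, V x⟫ = ∫ y, σ (x - y) * ⟪u y, V x⟫ ∂μ := fun x ↦ by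
    rw [real_inner_comm, mollify, ← integral_inner (h.integrable_smul hu.locallyIntegrable x)]
    simp only [inner_smul_right, real_inner_comm]
  have e2 : ∀ y, ⟪u y, mollify σ μ V y⟫ = ∫ x, σ (x - y) * ⟪u y, V x⟫ ∂μ := fun y ↦ by
    rw [mollify, ← integral_inner (h.integrable_smul hV y)]
    simp only [inner_smul_right, h.sub_comm y]
  simp only [e1, e2]
  exact integral_integral_swap key

theorem integral_mollify_mul (h : IsMollifier σ r μ)
    {u V : E → ℝ} (hu : Integrable u μ) (hu' : HasCompactSupport u)
    (hV : LocallyIntegrable V μ) :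
    ∫ x, mollify σ μ u x * V x ∂μ = ∫ y, u y * mollify σ μ V y ∂μ := by
  have := h.integral_inner_mollify hu hu' hV
  simpa only [RCLike.inner_apply, conj_trivial, mul_comm] using this

theorem sq_norm_mollify_le (h : IsMollifier σ r μ) {F : Type*} [NormedAddCommGroup F]
    [InnerProductSpace ℝ F] [CompleteSpace F] {u : E → F} (hu : LocallyIntegrable u μ)
    (hu2 : LocallyIntegrable (fun x ↦ ‖u x‖ ^ 2) μ) (x : E) :
    ‖mollify σ μ u x‖ ^ 2 ≤ mollify σ μ (fun y ↦ ‖u y‖ ^ 2) x := by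
  set w := mollify σ μ u x
  have hw : LocallyIntegrable (fun _ : E ↦ ‖w‖ ^ 2) μ := locallyIntegrable_const _
  have h1 : mollify σ μ (fun y ↦ 2 * ⟪w, u y⟫) x ≤
      mollify σ μ (fun y ↦ ‖u y‖ ^ 2 + ‖w‖ ^ 2) x := by
    refine h.mollify_mono ?_ (hu2.add hw) (Eventually.of_forall fun y ↦ ?_) x
    · exact (hu.clm_comp (innerSL ℝ w)).smul (2 : ℝ)
    · have := norm_sub_sq_real (u y) w
      rw [real_inner_comm] at this
      simp only [Pi.add_apply]
      nlinarith [sq_nonneg ‖u y - w‖]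
  have h2 : mollify σ μ (fun y ↦ ⟪w, u y⟫) x = ‖w‖ ^ 2 := by
    rw [← real_inner_self_eq_norm_sq]
    exact h.mollify_clm hu (innerSL ℝ w) x
  rw [mollify_const_mul, h.mollify_add hu2 hw, h.mollify_const, h2] at h1
  linarith

/-- Cauchy–Schwarz for mollifications, in a form without division: if `N ^ 2 ≤ J * f` then
`γ * (σ * N) ^ 2 ≤ σ * J` as soon as `γ * (σ * f) ≤ 1`. -/
theorem mul_sq_mollify_le (h : IsMollifier σ r μ) {N J f : E → ℝ} (hN : LocallyIntegrable N μ)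
    (hJ : LocallyIntegrable J μ) (hf : LocallyIntegrable f μ) (hJ0 : ∀ x, 0 ≤ J x)
    (hf0 : ∀ x, 0 ≤ f x) (hle : ∀ᵐ x ∂μ, N x ^ 2 ≤ J x * f x) {γ : ℝ} (hγ : 0 ≤ γ) (x : E)
    (hγf : γ * mollify σ μ f x ≤ 1) :
    γ * mollify σ μ N x ^ 2 ≤ mollify σ μ J x := by
  set n := mollify σ μ N x
  set t := γ * n
  have h1 : mollify σ μ (fun y ↦ (2 * t) * N y) x ≤
      mollify σ μ (fun y ↦ J y + t ^ 2 * f y) x := by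
    refine h.mollify_mono (hN.smul (2 * t)) (hJ.add (hf.smul (t ^ 2))) ?_ x
    filter_upwards [hle] with y hy
    have hsq : (2 * t * N y) ^ 2 ≤ (J y + t ^ 2 * f y) ^ 2 := by
      nlinarith [sq_nonneg (J y - t ^ 2 * f y), sq_nonneg t]
    exact le_of_abs_le (abs_le_of_sq_le_sq hsq
      (add_nonneg (hJ0 y) (mul_nonneg (sq_nonneg t) (hf0 y))))
  have h4 : mollify σ μ (fun y ↦ J y + t ^ 2 * f y) x =
      mollify σ μ J x + t ^ 2 * mollify σ μ f x := by
    rw [← mollify_const_mul]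
    exact h.mollify_add hJ (hf.smul (t ^ 2)) x
  rw [h4, mollify_const_mul] at h1
  have h2 : t ^ 2 * mollify σ μ f x ≤ γ * n ^ 2 := by
    have : t ^ 2 * mollify σ μ f x = γ * n ^ 2 * (γ * mollify σ μ f x) := by ring
    rw [this]
    exact mul_le_of_le_one_right (by positivity) hγf
  have h3 : 2 * t * n = 2 * (γ * n ^ 2) := by ring
  rw [show mollify σ μ N x = n from rfl] at h1
  linarith

end IsMollifier

end Mollification

theorem lintegral_ofReal_le_of_integral_le {α : Type*} [MeasurableSpace α] {μ : Measure α}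
    {h : ℕ → α → ℝ} {h' : α → ℝ} {B : ℝ} (hi : ∀ k, Integrable (h k) μ)
    (h0 : ∀ k x, 0 ≤ h k x) (hB : ∀ k, ∫ x, h k x ∂μ ≤ B)
    (hlim : ∀ᵐ x ∂μ, h' x ≤ 0 ∨ Tendsto (fun k ↦ h k x) atTop (𝓝 (h' x))) :
    ∫⁻ x, ENNReal.ofReal (h' x) ∂μ ≤ ENNReal.ofReal B := by
  calc ∫⁻ x, ENNReal.ofReal (h' x) ∂μ
      ≤ ∫⁻ x, liminf (fun k ↦ ENNReal.ofReal (h k x)) atTop ∂μ := by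
        refine lintegral_mono_ae ?_
        filter_upwards [hlim] with x hx
        rcases hx with hx | hx
        · simp [ENNReal.ofReal_of_nonpos hx]
        · exact ((ENNReal.continuous_ofReal.tendsto _).comp hx).liminf_eq.ge
    _ ≤ liminf (fun k ↦ ∫⁻ x, ENNReal.ofReal (h k x) ∂μ) atTop :=
        lintegral_liminf_le' fun k ↦ (hi k).aemeasurable.ennreal_ofReal
    _ ≤ liminf (fun _ : ℕ ↦ ENNReal.ofReal B) atTop := by
        refine liminf_le_liminf (Eventually.of_forall fun k ↦ ?_)
        rw [← ofReal_integral_eq_lintegral_ofReal (hi k) (Eventually.of_forall (h0 k))]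
        exact ENNReal.ofReal_le_ofReal (hB k)
    _ = ENNReal.ofReal B := by simp

section WeakGradient

open ContinuousLinearMap
open scoped Convolution ContDiff

/-- The bump function with radii `r / 2` and `r`. -/
noncomputable def halfBump {E : Type*} [NormedAddCommGroup E] (r : ℝ) (hr : 0 < r) :
    ContDiffBump (0 : E) :=
  ⟨r / 2, r, half_pos hr, half_lt_self hr⟩

theorem ae_tendsto_mollify {E F : Type*} [NormedAddCommGroup E] [InnerProductSpace ℝ E]
    [FiniteDimensional ℝ E] [MeasurableSpace E] [BorelSpace E] {μ : Measure E}
    [μ.IsAddHaarMeasure] [NormedAddCommGroup F] [NormedSpace ℝ F] [CompleteSpace F]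
    {r : ℕ → ℝ} (hr : ∀ k, 0 < r k) (hr0 : Tendsto r atTop (𝓝 0)) {f : E → F}
    (hf : LocallyIntegrable f μ) :
    ∀ᵐ x ∂μ, Tendsto (fun k ↦ mollify ((halfBump (r k) (hr k)).normed μ) μ f x) atTop
      (𝓝 (f x)) := by
  simp only [IsMollifier.mollify_eq_convolution]
  refine ContDiffBump.ae_convolution_tendsto_right_of_locallyIntegrable (K := 2) hr0 ?_ hf
  refine Eventually.of_forall fun k ↦ ?_
  simp only [halfBump]
  linarith

variable {f : EuclideanSpace ℝ (Fin l) → ℝ}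
  {g : EuclideanSpace ℝ (Fin l) → EuclideanSpace ℝ (Fin l)}

theorem HasGradientAt.inner_eq_fderiv {E : Type*} [NormedAddCommGroup E] [InnerProductSpace ℝ E]
    [CompleteSpace E] {f : E → ℝ} {f' x : E} (h : HasGradientAt f f' x) (v : E) :
    fderiv ℝ f x v = ⟪f', v⟫ := by
  rw [(hasGradientAt_iff_hasFDerivAt.1 h).fderiv, InnerProductSpace.toDual_apply_apply]

theorem ContDiff.hasGradientAt {E : Type*} [NormedAddCommGroup E] [InnerProductSpace ℝ E]
    [CompleteSpace E] {f : E → ℝ} (h : ContDiff ℝ 1 f) (x : E) :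
    HasGradientAt f (gradient f x) x :=
  (h.differentiable one_ne_zero).differentiableAt.hasGradientAt

theorem ContDiff.continuous_gradient {E : Type*} [NormedAddCommGroup E] [InnerProductSpace ℝ E]
    [CompleteSpace E] {f : E → ℝ} (h : ContDiff ℝ 1 f) : Continuous (gradient f) :=
  (InnerProductSpace.toDual ℝ E).symm.continuous.comp (h.continuous_fderiv one_ne_zero)

theorem HasCompactSupport.gradient {E : Type*} [NormedAddCommGroup E] [InnerProductSpace ℝ E]
    [CompleteSpace E] {f : E → ℝ} (h : HasCompactSupport f) : HasCompactSupport (gradient f) :=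
  (h.fderiv ℝ).comp_left (map_zero _)

theorem ContDiff.hasWeakGrad_gradient (h : ContDiff ℝ 1 f) : HasWeakGrad f (gradient f) := by
  refine ⟨h.continuous.locallyIntegrable, h.continuous_gradient.locallyIntegrable, ?_⟩
  intro p hp hp' v
  have hp1 : ContDiff ℝ 1 p := hp.of_le (by exact_mod_cast le_top)
  have hfc : Continuous fun x ↦ fderiv ℝ f x v :=
    (h.continuous_fderiv one_ne_zero).clm_apply continuous_const
  have hpc : Continuous fun x ↦ fderiv ℝ p x v :=
    (hp1.continuous_fderiv one_ne_zero).clm_apply continuous_const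
  have hps : HasCompactSupport fun x ↦ fderiv ℝ p x v :=
    hp'.fderiv_apply (𝕜 := ℝ) v
  rw [integral_mul_fderiv_eq_neg_fderiv_mul_of_integrable]
  · simp only [(h.hasGradientAt _).inner_eq_fderiv]
  · exact (hfc.mul hp1.continuous).integrable_of_hasCompactSupport hp'.mul_left
  · exact (h.continuous.mul hpc).integrable_of_hasCompactSupport hps.mul_left
  · exact (h.continuous.mul hp1.continuous).integrable_of_hasCompactSupport hp'.mul_left
  · exact fun x _ ↦ (h.differentiable one_ne_zero).differentiableAt
  · exact fun x _ ↦ (hp1.differentiable one_ne_zero).differentiableAt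

theorem HasWeakGrad.hasGradientAt_mollify (h : HasWeakGrad f g)
    {σ : EuclideanSpace ℝ (Fin l) → ℝ} {r : ℝ} (hσ : IsMollifier σ r volume)
    (x : EuclideanSpace ℝ (Fin l)) :
    HasGradientAt (mollify σ volume f) (mollify σ volume g x) x := by
  have hσ1 : ContDiff ℝ 1 σ := hσ.contDiff.of_le (by exact_mod_cast le_top)
  rw [hasGradientAt_iff_hasFDerivAt, IsMollifier.mollify_eq_convolution]
  refine (hσ.hasCompactSupport.hasFDerivAt_convolution_left (lsmul ℝ ℝ) hσ1 h.1 x).congr_fderiv ?_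
  ext v
  have hi := ((hσ.hasCompactSupport.fderiv ℝ).convolutionExists_left
    ((lsmul ℝ ℝ : ℝ →L[ℝ] ℝ →L[ℝ] ℝ).precompL (EuclideanSpace ℝ (Fin l)))
    (hσ1.continuous_fderiv one_ne_zero) h.1 x).integrable_swap
  have key := h.2.2 (fun y ↦ σ (x - y)) (hσ.contDiff.comp (contDiff_const.sub contDiff_id))
    (hσ.hasCompactSupport.comp_homeomorph (Homeomorph.subLeft x)) v
  have hd : ∀ y, fderiv ℝ (fun y ↦ σ (x - y)) y v = - fderiv ℝ σ (x - y) v := fun y ↦ by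
    have h1 : HasFDerivAt σ (fderiv ℝ σ (x - y)) (x - y) :=
      (hσ1.differentiable one_ne_zero).differentiableAt.hasFDerivAt
    have h2 : HasFDerivAt (fun y ↦ x - y)
        (-ContinuousLinearMap.id ℝ (EuclideanSpace ℝ (Fin l))) y :=
      (hasFDerivAt_id y).const_sub x
    have h3 : HasFDerivAt (fun y ↦ σ (x - y)) _ y := h1.comp y h2
    rw [h3.fderiv]
    simp
  simp only [hd, mul_neg, integral_neg, neg_inj] at key
  rw [convolution_eq_swap, ContinuousLinearMap.integral_apply hi,
    InnerProductSpace.toDual_apply_apply, mollify, real_inner_comm,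
    ← integral_inner (hσ.integrable_smul h.2.1 x)]
  simp only [precompL_apply, lsmul_apply, smul_eq_mul, inner_smul_right]
  rw [← integral_congr_ae (Eventually.of_forall fun y ↦ mul_comm (f y) _), key]
  exact integral_congr_ae (Eventually.of_forall fun y ↦ by
    simp only [real_inner_comm (g y) v, mul_comm])

theorem HasWeakGrad.gradient_mollify (h : HasWeakGrad f g)
    {σ : EuclideanSpace ℝ (Fin l) → ℝ} {r : ℝ} (hσ : IsMollifier σ r volume) :
    gradient (mollify σ volume f) = mollify σ volume g :=
  funext fun x ↦ (h.hasGradientAt_mollify hσ x).gradient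

/-- Integration by parts against a Lipschitz vector field. -/
theorem abs_integral_inner_gradient_le (hf : ContDiff ℝ 1 f) (hf' : HasCompactSupport f)
    {w : EuclideanSpace ℝ (Fin l) → EuclideanSpace ℝ (Fin l)} {L : NNReal}
    (hw : LipschitzWith L w) :
    |∫ x, ⟪gradient f x, w x⟫| ≤ l * L * ∫ x, |f x| := by
  set e : Fin l → EuclideanSpace ℝ (Fin l) := fun i ↦ EuclideanSpace.single i 1
  obtain ⟨D, hD⟩ := ContDiff.lipschitzWith_of_hasCompactSupport hf' hf one_ne_zero
  have hexp : ∀ x, ⟪gradient f x, w x⟫ = ∑ i, fderiv ℝ f x (e i) * w x i := fun x ↦ by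
    rw [PiLp.inner_apply]
    refine Finset.sum_congr rfl fun i _ ↦ ?_
    rw [(hf.hasGradientAt x).inner_eq_fderiv, EuclideanSpace.inner_single_right]
    simp [mul_comm]
  have hwi : ∀ i, LipschitzWith L fun x ↦ w x i := fun i ↦
    LipschitzWith.of_dist_le_mul fun x y ↦ by
      refine le_trans ?_ (hw.dist_le_mul x y)
      rw [dist_eq_norm, dist_eq_norm]
      exact PiLp.norm_apply_le (w x - w y) i
  have hint : ∀ i, Integrable fun x ↦ fderiv ℝ f x (e i) * w x i := fun i ↦
    (((hf.continuous_fderiv one_ne_zero).clm_apply continuous_const).mul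
      (hwi i).continuous).integrable_of_hasCompactSupport (hf'.fderiv_apply (𝕜 := ℝ) (e i)).mul_right
  have hfi : Integrable fun x ↦ |f x| :=
    (hf.continuous.integrable_of_hasCompactSupport hf').abs
  have hb : ∀ i, |∫ x, fderiv ℝ f x (e i) * w x i| ≤ L * ∫ x, |f x| := fun i ↦ by
    have h1 := (hwi i).integral_lineDeriv_mul_eq (μ := volume) hD hf' (-(e i))
    simp only [neg_neg] at h1
    have h2 : ∀ x, lineDeriv ℝ f x (e i) = fderiv ℝ f x (e i) := fun x ↦
      (hf.differentiable one_ne_zero).differentiableAt.lineDeriv_eq_fderiv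
    simp only [h2] at h1
    rw [← h1, ← integral_const_mul]
    rw [← Real.norm_eq_abs]
    refine norm_integral_le_of_norm_le (hfi.const_mul _) (Eventually.of_forall fun x ↦ ?_)
    have h3 := norm_lineDeriv_le_of_lipschitz ℝ (hwi i) (x₀ := x) (v := -(e i))
    have h4 : ‖-(e i)‖ = 1 := by simp [e]
    rw [h4, mul_one] at h3
    rw [norm_mul, Real.norm_eq_abs (f x)]
    gcongr
  simp only [hexp]
  rw [integral_finsetSum _ fun i _ ↦ hint i]
  calc _ ≤ ∑ i : Fin l, |∫ x, fderiv ℝ f x (e i) * w x i| := Finset.abs_sum_le_sum_abs _ _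
    _ ≤ ∑ _i : Fin l, L * ∫ x, |f x| := Finset.sum_le_sum fun i _ ↦ hb i
    _ = l * L * ∫ x, |f x| := by simp [mul_assoc]

end WeakGradient

section ZeroSet

open scoped ContDiff

variable {f : EuclideanSpace ℝ (Fin l) → ℝ}
  {g : EuclideanSpace ℝ (Fin l) → EuclideanSpace ℝ (Fin l)}

theorem HasWeakGrad.neg_integral_le (h : HasWeakGrad f g) (hf0 : ∀ x, 0 ≤ f x) {δ : ℝ}
    (hδ : 0 < δ) {p : EuclideanSpace ℝ (Fin l) → ℝ} (hp : ContDiff ℝ ∞ p)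
    (hp' : HasCompactSupport p) (v : EuclideanSpace ℝ (Fin l)) :
    -∫ x, (δ / (δ + f x)) ^ 2 * (⟪g x, v⟫ * p x) ≤ δ * ∫ x, |fderiv ℝ p x v| := by
  obtain ⟨R, hR⟩ := hp'.isCompact.isBounded.subset_closedBall (0 : EuclideanSpace ℝ (Fin l))
  obtain ⟨C, hC⟩ := hp.continuous.bounded_above_of_compact_support hp'
  have hC0 : 0 ≤ C := (norm_nonneg _).trans (hC 0)
  have hp1 : ContDiff ℝ 1 p := hp.of_le (by exact_mod_cast le_top)
  have hpR : ∀ x, x ∉ Metric.closedBall (0 : EuclideanSpace ℝ (Fin l)) R → p x = 0 :=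
    fun x hx ↦ image_eq_zero_of_notMem_tsupport fun hx' ↦ hx (hR hx')
  have hpc : Continuous fun x ↦ fderiv ℝ p x v :=
    (hp1.continuous_fderiv one_ne_zero).clm_apply continuous_const
  have hps : HasCompactSupport fun x ↦ fderiv ℝ p x v := hp'.fderiv_apply (𝕜 := ℝ) v
  set S := Metric.closedBall (0 : EuclideanSpace ℝ (Fin l)) (R + 1) with hS
  set G : EuclideanSpace ℝ (Fin l) → ℝ := S.indicator fun x ↦ (C * ‖v‖) * ‖g x‖ with hG
  have hGS : IntegrableOn (fun x ↦ (C * ‖v‖) * ‖g x‖) S volume :=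
    (h.2.1.integrableOn_isCompact (isCompact_closedBall _ _)).norm.const_mul _
  have hGi : Integrable G := hGS.integrable_indicator measurableSet_closedBall
  set r : ℕ → ℝ := fun k ↦ 1 / ((k : ℝ) + 1)
  have hr : ∀ k, 0 < r k := fun k ↦ by positivity
  have hr1 : ∀ k, r k ≤ 1 := fun k ↦ by
    simp only [r]
    rw [div_le_one (by positivity)]
    linarith [(Nat.cast_nonneg k : (0 : ℝ) ≤ k)]
  have hr0 : Tendsto r atTop (𝓝 0) := tendsto_one_div_add_atTop_nhds_zero_nat
  set σ : ℕ → EuclideanSpace ℝ (Fin l) → ℝ := fun k ↦ (halfBump (r k) (hr k)).normed volume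
  have hσ : ∀ k, IsMollifier (σ k) (r k) volume := fun k ↦
    (halfBump (r k) (hr k)).isMollifier_normed
  have hweight : ∀ {a : ℝ}, 0 ≤ a → 0 ≤ (δ / (δ + a)) ^ 2 ∧ (δ / (δ + a)) ^ 2 ≤ 1 := fun {a} ha ↦ by
    refine ⟨by positivity, pow_le_one₀ (by positivity) ?_⟩
    rw [div_le_one (by positivity)]
    linarith
  have hfk0 : ∀ k x, 0 ≤ mollify (σ k) volume f x := fun k x ↦ (hσ k).mollify_nonneg hf0 x
  have hfkd : ∀ k, ContDiff ℝ 1 (mollify (σ k) volume f) := fun k ↦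
    ((hσ k).contDiff_mollify h.1).of_le (by exact_mod_cast le_top)
  have hgkc : ∀ k, Continuous (mollify (σ k) volume g) := fun k ↦ (hσ k).continuous_mollify h.2.1
  set Q : ℕ → EuclideanSpace ℝ (Fin l) → ℝ := fun k x ↦
    (δ / (δ + mollify (σ k) volume f x)) ^ 2 * (⟪mollify (σ k) volume g x, v⟫ * p x)
  have hQc : ∀ k, Continuous (Q k) := fun k ↦ by
    refine ((continuous_const.div (continuous_const.add (hfkd k).continuous) fun x ↦ ?_).pow 2).mul
      (((hgkc k).inner continuous_const).mul hp.continuous)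
    exact (add_pos_of_pos_of_nonneg hδ (hfk0 k x)).ne'
  have hQi : ∀ k, Integrable (Q k) := fun k ↦
    (hQc k).integrable_of_hasCompactSupport (hp'.mul_left.mul_left)
  have hbound : ∀ {a b : ℝ} {q : EuclideanSpace ℝ (Fin l)} {x}, 0 ≤ a → (x ∈
      Metric.closedBall (0 : EuclideanSpace ℝ (Fin l)) R → (C * ‖v‖) * ‖q‖ ≤ b) → 0 ≤ b →
      |(δ / (δ + a)) ^ 2 * (⟪q, v⟫ * p x)| ≤ b := fun {a b q x} ha hb hb0 ↦ by
    by_cases hx : x ∈ Metric.closedBall (0 : EuclideanSpace ℝ (Fin l)) R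
    · refine le_trans ?_ (hb hx)
      rw [abs_mul, abs_mul, abs_of_nonneg (hweight ha).1]
      calc _ ≤ 1 * ((‖q‖ * ‖v‖) * C) := by
            gcongr
            · exact (hweight ha).2
            · exact abs_real_inner_le_norm _ _
            · exact hC x
        _ = _ := by ring
    · simpa [hpR x hx] using hb0
  have hG0 : ∀ x, 0 ≤ G x := fun x ↦ Set.indicator_nonneg (fun x _ ↦ by positivity) x
  have hRS : ∀ {x}, x ∈ Metric.closedBall (0 : EuclideanSpace ℝ (Fin l)) R → x ∈ S :=
    fun hx ↦ Metric.closedBall_subset_closedBall (by linarith) hx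
  have hQle : ∀ k x, |Q k x| ≤ mollify (σ k) volume G x := fun k x ↦ by
    refine hbound (hfk0 k x) (fun hx ↦ ?_) ((hσ k).mollify_nonneg hG0 x)
    have h1 : mollify (σ k) volume G x = (C * ‖v‖) * mollify (σ k) volume (fun y ↦ ‖g y‖) x := by
      rw [← IsMollifier.mollify_const_mul]
      refine (hσ k).mollify_congr_of_dist_le fun y hy ↦ Set.indicator_of_mem ?_ _
      rw [mem_closedBall_zero_iff] at hx ⊢
      have := norm_le_insert x y
      rw [dist_eq_norm] at hy
      linarith [hr1 k]
    rw [h1]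
    gcongr
    exact (hσ k).norm_mollify_le x
  have hlimle : ∀ x, |(δ / (δ + f x)) ^ 2 * (⟪g x, v⟫ * p x)| ≤ G x := fun x ↦
    hbound (hf0 x) (fun hx ↦ by simp only [hG, Set.indicator_of_mem (hRS hx), le_refl]) (hG0 x)
  have hibp : ∀ k, -∫ x, Q k x ≤ δ * ∫ x, |fderiv ℝ p x v| := fun k ↦ by
    set m := mollify (σ k) volume f
    have hpos : ∀ x, 0 < δ + m x := fun x ↦ by linarith [hfk0 k x]
    have hd : ∀ x, HasFDerivAt (fun x ↦ δ * m x / (δ + m x))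
        ((δ / (δ + m x)) ^ 2 • fderiv ℝ m x) x := fun x ↦ by
      have h1 : HasDerivAt (fun s : ℝ ↦ δ * s / (δ + s)) ((δ / (δ + m x)) ^ 2) (m x) := by
        have := ((hasDerivAt_id (m x)).const_mul δ).div ((hasDerivAt_id (m x)).const_add δ)
          (hpos x).ne'
        refine this.congr_deriv ?_
        simp only [id]
        field_simp [(hpos x).ne']
        ring
      exact h1.comp_hasFDerivAt x ((hfkd k).differentiable one_ne_zero).differentiableAt.hasFDerivAt
    have hgr : ∀ x, fderiv ℝ m x v = ⟪mollify (σ k) volume g x, v⟫ := fun x ↦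
      (h.hasGradientAt_mollify (hσ k) x).inner_eq_fderiv v
    have hcw : Continuous fun x ↦ δ * m x / (δ + m x) :=
      (continuous_const.mul (hfkd k).continuous).div (continuous_const.add (hfkd k).continuous)
        fun x ↦ (hpos x).ne'
    have hQ : ∀ x, fderiv ℝ (fun x ↦ δ * m x / (δ + m x)) x v * p x = Q k x := fun x ↦ by
      rw [(hd x).fderiv]
      simp only [smul_apply, smul_eq_mul, hgr, Q, m]
      ring
    have key := integral_mul_fderiv_eq_neg_fderiv_mul_of_integrable
      (μ := (volume : Measure (EuclideanSpace ℝ (Fin l))))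
      (f := fun x ↦ δ * m x / (δ + m x)) (g := p) (v := v) ?_ ?_ ?_ ?_ ?_
    · simp only [hQ] at key
      rw [← key, ← integral_const_mul]
      refine integral_mono ((hcw.mul hpc).integrable_of_hasCompactSupport hps.mul_left)
        ((hpc.abs.integrable_of_hasCompactSupport hps.norm).const_mul δ) fun x ↦ ?_
      have hw0 : 0 ≤ δ * m x / (δ + m x) :=
        div_nonneg (mul_nonneg hδ.le (hfk0 k x)) (hpos x).le
      have hw1 : δ * m x / (δ + m x) ≤ δ := by
        rw [div_le_iff₀ (hpos x)]
        nlinarith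
      calc δ * m x / (δ + m x) * fderiv ℝ p x v
          ≤ δ * m x / (δ + m x) * |fderiv ℝ p x v| := by gcongr; exact le_abs_self _
        _ ≤ δ * |fderiv ℝ p x v| := by gcongr
    · simpa only [hQ] using hQi k
    · exact (hcw.mul hpc).integrable_of_hasCompactSupport hps.mul_left
    · exact (hcw.mul hp.continuous).integrable_of_hasCompactSupport hp'.mul_left
    · exact fun x _ ↦ (hd x).differentiableAt
    · exact fun x _ ↦ (hp1.differentiable one_ne_zero).differentiableAt
  have hlimi : Integrable fun x ↦ (δ / (δ + f x)) ^ 2 * (⟪g x, v⟫ * p x) := by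
    refine hGi.mono' ?_ (Eventually.of_forall hlimle)
    exact ((aemeasurable_const.div (aemeasurable_const.add
      h.1.aestronglyMeasurable.aemeasurable)).pow_const 2).aestronglyMeasurable.mul
      ((h.2.1.aestronglyMeasurable.inner aestronglyMeasurable_const).mul
        hp.continuous.aestronglyMeasurable)
  have hfatou := lintegral_ofReal_le_of_integral_le (μ := volume)
    (h := fun k x ↦ mollify (σ k) volume G x - Q k x)
    (h' := fun x ↦ G x - (δ / (δ + f x)) ^ 2 * (⟪g x, v⟫ * p x))
    (B := (∫ x, G x) + δ * ∫ x, |fderiv ℝ p x v|)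
    (fun k ↦ ((hσ k).integrable_mollify hGi).sub (hQi k))
    (fun k x ↦ sub_nonneg.2 (le_of_abs_le (hQle k x)))
    (fun k ↦ by
      rw [integral_sub ((hσ k).integrable_mollify hGi) (hQi k), (hσ k).integral_mollify hGi]
      linarith [hibp k]) ?_
  · have hsub : Integrable fun x ↦ G x - (δ / (δ + f x)) ^ 2 * (⟪g x, v⟫ * p x) := hGi.sub hlimi
    rw [← ofReal_integral_eq_lintegral_ofReal hsub
      (Eventually.of_forall fun x ↦ sub_nonneg.2 (le_of_abs_le (hlimle x))),
      ENNReal.ofReal_le_ofReal_iff (add_nonneg (integral_nonneg hG0)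
        (mul_nonneg hδ.le (integral_nonneg fun _ ↦ abs_nonneg _)))] at hfatou
    rw [integral_sub hGi hlimi] at hfatou
    linarith
  · filter_upwards [ae_tendsto_mollify hr hr0 hGi.locallyIntegrable, ae_tendsto_mollify hr hr0 h.1,
      ae_tendsto_mollify hr hr0 h.2.1] with x hx1 hx2 hx3
    refine Or.inr (hx1.sub (Tendsto.mul ((tendsto_const_nhds.div (tendsto_const_nhds.add hx2)
      ?_).pow 2) ((hx3.inner tendsto_const_nhds).mul tendsto_const_nhds)))
    have := hf0 x
    positivity

/-- The weak gradient of a nonnegative function vanishes almost everywhere on its zero set. -/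
theorem HasWeakGrad.ae_eq_zero_of_eq_zero (h : HasWeakGrad f g) (hf0 : ∀ x, 0 ≤ f x)
    (hfm : Measurable f) : ∀ᵐ x, f x = 0 → g x = 0 := by
  set Z := f ⁻¹' {0}
  have hZ : MeasurableSet Z := hfm (measurableSet_singleton 0)
  have hle : ∀ (p : EuclideanSpace ℝ (Fin l) → ℝ), ContDiff ℝ ∞ p → HasCompactSupport p →
      ∀ v, -∫ x, Z.indicator (fun x ↦ ⟪g x, v⟫ * p x) x ≤ 0 := fun p hp hp' v ↦ by
    set δ : ℕ → ℝ := fun n ↦ 1 / ((n : ℝ) + 1)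
    have hδ : ∀ n, 0 < δ n := fun n ↦ by positivity
    have hδ0 : Tendsto δ atTop (𝓝 0) := tendsto_one_div_add_atTop_nhds_zero_nat
    have hgp : Integrable fun x ↦ ⟪g x, v⟫ * p x := by
      have h1 : LocallyIntegrable (fun x ↦ ⟪g x, v⟫) := by
        simpa only [innerSL_apply_apply, real_inner_comm] using h.2.1.clm_comp (innerSL ℝ v)
      simpa only [smul_eq_mul, mul_comm] using
        h1.integrable_smul_left_of_hasCompactSupport hp.continuous hp'
    have hlim : Tendsto (fun n ↦ ∫ x, (δ n / (δ n + f x)) ^ 2 * (⟪g x, v⟫ * p x)) atTop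
        (𝓝 (∫ x, Z.indicator (fun x ↦ ⟪g x, v⟫ * p x) x)) := by
      refine tendsto_integral_of_dominated_convergence (fun x ↦ ‖⟪g x, v⟫ * p x‖)
        (fun n ↦ ?_) hgp.norm (fun n ↦ Eventually.of_forall fun x ↦ ?_)
        (Eventually.of_forall fun x ↦ ?_)
      · exact ((measurable_const.div (measurable_const.add hfm)).pow_const
          2).aestronglyMeasurable.mul hgp.aestronglyMeasurable
      · rw [norm_mul]
        refine mul_le_of_le_one_left (norm_nonneg _) ?_
        have h1 := hf0 x
        have h2 := hδ n
        rw [Real.norm_of_nonneg (by positivity)]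
        refine pow_le_one₀ (by positivity) ?_
        rw [div_le_one (by positivity)]
        linarith
      · by_cases hx : x ∈ Z
        · have hx0 : f x = 0 := hx
          rw [Set.indicator_of_mem hx]
          refine tendsto_const_nhds.congr fun n ↦ ?_
          rw [hx0, add_zero, div_self (hδ n).ne', one_pow, one_mul]
        · have hx0 : f x ≠ 0 := hx
          rw [Set.indicator_of_notMem hx]
          have := ((hδ0.div (hδ0.add_const (f x)) (by simpa using hx0)).pow 2).mul_const
            (⟪g x, v⟫ * p x)
          simpa using this
    have h1 := hδ0.mul_const (∫ x, |fderiv ℝ p x v|)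
    rw [zero_mul] at h1
    exact le_of_tendsto_of_tendsto' hlim.neg h1 fun n ↦ h.neg_integral_le hf0 (hδ n) hp hp' v
  have hz : ∀ v, ∀ᵐ x, Z.indicator (fun x ↦ ⟪g x, v⟫) x = 0 := fun v ↦ by
    have h1 : LocallyIntegrable (fun x ↦ ⟪g x, v⟫) := by
      simpa only [innerSL_apply_apply, real_inner_comm] using h.2.1.clm_comp (innerSL ℝ v)
    refine ae_eq_zero_of_integral_contDiff_smul_eq_zero (h1.indicator hZ) fun p hp hp' ↦ ?_
    have e : ∀ x, p x • Z.indicator (fun x ↦ ⟪g x, v⟫) x =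
        Z.indicator (fun x ↦ ⟪g x, v⟫ * p x) x := fun x ↦ by
      by_cases hx : x ∈ Z <;> simp [hx, mul_comm]
    simp only [e]
    have a1 := hle p hp hp' v
    have a2 := hle p hp hp' (-v)
    have e2 : ∀ x, Z.indicator (fun x ↦ ⟪g x, -v⟫ * p x) x =
        -Z.indicator (fun x ↦ ⟪g x, v⟫ * p x) x := fun x ↦ by
      by_cases hx : x ∈ Z <;> simp [hx]
    simp only [e2, integral_neg] at a2
    linarith
  have hall := ae_all_iff.2 fun i : Fin l ↦ hz (EuclideanSpace.single i 1)
  filter_upwards [hall] with x hx hx0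
  ext i
  have := hx i
  rw [Set.indicator_of_mem (show x ∈ Z from hx0), EuclideanSpace.inner_single_right] at this
  simpa using this

end ZeroSet

section Coefficients

theorem MeasureTheory.LocallyIntegrable.norm {X E : Type*} [TopologicalSpace X] [MeasurableSpace X]
    [NormedAddCommGroup E] {μ : Measure X} {f : X → E} (hf : LocallyIntegrable f μ) :
    LocallyIntegrable (fun x ↦ ‖f x‖) μ :=
  fun x ↦ (hf x).norm

theorem MeasureTheory.LocallyIntegrable.integrable_inner {X E : Type*} [TopologicalSpace X]
    [T2Space X] [SecondCountableTopology X] [TopologicalSpace.PseudoMetrizableSpace X] [MeasurableSpace X]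
    [OpensMeasurableSpace X]
    [NormedAddCommGroup E] [InnerProductSpace ℝ E] {μ : Measure X} {w V : X → E}
    (hV : LocallyIntegrable V μ) (hw : Continuous w) (hw' : HasCompactSupport w) :
    Integrable (fun x ↦ ⟪w x, V x⟫) μ := by
  obtain ⟨C, hC⟩ := hw.bounded_above_of_compact_support hw'
  rw [← integrableOn_iff_integrable_of_support_subset (s := tsupport w)]
  · refine ((hV.integrableOn_isCompact hw').norm.const_mul C).mono'
      (hw.aestronglyMeasurable.inner hV.aestronglyMeasurable).restrict
      (Eventually.of_forall fun x ↦ (norm_inner_le_norm _ _).trans ?_)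
    gcongr
    exact hC x
  · refine Function.support_subset_iff'.2 fun x hx ↦ ?_
    rw [image_eq_zero_of_notMem_tsupport hx, inner_zero_left]

theorem IsMollifier.norm_mollify_clm_apply_sub_le {E F G : Type*} [NormedAddCommGroup E]
    [InnerProductSpace ℝ E] [FiniteDimensional ℝ E] [MeasurableSpace E] [BorelSpace E]
    [NormedAddCommGroup F] [NormedSpace ℝ F] [CompleteSpace F] [NormedAddCommGroup G]
    [NormedSpace ℝ G] [CompleteSpace G] {μ : Measure E} [μ.IsAddHaarMeasure] {σ : E → ℝ} {r : ℝ}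
    (h : IsMollifier σ r μ) {f : E → F} (hf : LocallyIntegrable f μ) {A : E → F →L[ℝ] G}
    {K : NNReal} (hA : LipschitzWith K A) (hAf : LocallyIntegrable (fun x ↦ A x (f x)) μ) (x : E) :
    ‖mollify σ μ (fun y ↦ A y (f y)) x - A x (mollify σ μ f x)‖ ≤
      r * K * mollify σ μ (fun y ↦ ‖f y‖) x := by
  rw [← h.mollify_clm hf (A x)]
  simp only [mollify]
  rw [← integral_sub (h.integrable_smul hAf x) (h.integrable_smul (hf.clm_comp (A x)) x),
    ← integral_const_mul]
  refine norm_integral_le_of_norm_le ((h.integrable_smul hf.norm x).const_mul _)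
    (Eventually.of_forall fun y ↦ ?_)
  by_cases hy : dist x y ≤ r
  · rw [← smul_sub, ← sub_apply, norm_smul, Real.norm_of_nonneg (h.nonneg _),
      smul_eq_mul]
    calc σ (x - y) * ‖(A y - A x) (f y)‖ ≤ σ (x - y) * (K * r * ‖f y‖) := by
          refine mul_le_mul_of_nonneg_left ?_ (h.nonneg _)
          refine ((A y - A x).le_opNorm _).trans ?_
          gcongr
          rw [← dist_eq_norm]
          refine (hA.dist_le_mul y x).trans ?_
          rw [dist_comm]
          gcongr
      _ = _ := by ring
  · have : σ (x - y) = 0 := h.eq_zero _ (by simpa [dist_eq_norm] using hy)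
    simp [this]

theorem LipschitzWith.toSpanSingleton {X E : Type*} [PseudoMetricSpace X] [NormedAddCommGroup E]
    [NormedSpace ℝ E] {b : X → E} {K : NNReal} (hb : LipschitzWith K b) :
    LipschitzWith K fun x ↦ ContinuousLinearMap.toSpanSingleton ℝ (b x) := by
  refine LipschitzWith.of_dist_le_mul fun x y ↦ ?_
  rw [dist_eq_norm]
  refine ContinuousLinearMap.opNorm_le_bound _ (by positivity) fun s ↦ ?_
  rw [sub_apply, ContinuousLinearMap.toSpanSingleton_apply,
    ContinuousLinearMap.toSpanSingleton_apply, ← smul_sub, norm_smul, mul_comm, ← dist_eq_norm]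
  gcongr
  exact hb.dist_le_mul x y

/-- Symmetric uniformly elliptic Lipschitz fields of operators. -/
structure IsEllipticField {E : Type*} [NormedAddCommGroup E] [InnerProductSpace ℝ E] (θ : ℝ)
    (K : NNReal) (c : E → E →L[ℝ] E) : Prop where
  pos : 0 < θ
  symm : ∀ x y z, ⟪c x y, z⟫ = ⟪y, c x z⟫
  lower : ∀ x y, θ * ‖y‖ ^ 2 ≤ ⟪c x y, y⟫
  upper : ∀ x y, ⟪c x y, y⟫ ≤ θ⁻¹ * ‖y‖ ^ 2
  lipschitz : LipschitzWith K c

namespace IsEllipticField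

variable {E : Type*} [NormedAddCommGroup E] [InnerProductSpace ℝ E] {θ : ℝ} {K : NNReal}
  {c : E → E →L[ℝ] E}

theorem norm_apply_le (h : IsEllipticField θ K c) (x y : E) : ‖c x y‖ ≤ θ⁻¹ * ‖y‖ := by
  have hθ := h.pos
  have h0 : 0 ≤ ⟪c x (y - θ • c x y), y - θ • c x y⟫ := le_trans (by positivity) (h.lower x _)
  have h1 := h.upper x (c x y)
  have h2 := h.upper x y
  have h3 : ⟪c x (c x y), y⟫ = ‖c x y‖ ^ 2 := by
    rw [h.symm, real_inner_self_eq_norm_sq]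
  simp only [map_sub, map_smul, inner_sub_left, inner_sub_right, inner_smul_left,
    inner_smul_right, conj_trivial, h3, real_inner_self_eq_norm_sq] at h0
  refine le_of_sq_le_sq ?_ (by positivity)
  have h4 : θ * (θ * ⟪c x (c x y), c x y⟫) ≤ θ * ‖c x y‖ ^ 2 := by
    gcongr
    calc θ * ⟪c x (c x y), c x y⟫ ≤ θ * (θ⁻¹ * ‖c x y‖ ^ 2) := by gcongr
      _ = _ := by field_simp
  have h5 : θ * ‖c x y‖ ^ 2 ≤ θ⁻¹ * ‖y‖ ^ 2 := by linarith
  calc ‖c x y‖ ^ 2 = θ⁻¹ * (θ * ‖c x y‖ ^ 2) := by field_simp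
    _ ≤ θ⁻¹ * (θ⁻¹ * ‖y‖ ^ 2) := by gcongr
    _ = _ := by ring

theorem lipschitz_apply (h : IsEllipticField θ K c) {w : E → E} {η : NNReal}
    (hw : LipschitzWith η w) (hw' : ∀ x, ‖w x‖ ≤ η) :
    LipschitzWith ((K + Real.toNNReal θ⁻¹) * η) fun x ↦ c x (w x) := by
  refine LipschitzWith.of_dist_le_mul fun x y ↦ ?_
  have h1 : c x (w x) - c y (w y) = (c x - c y) (w x) + c y (w x - w y) := by
    simp
  have hK := h.lipschitz.dist_le_mul x y
  have hη := hw.dist_le_mul x y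
  rw [dist_eq_norm] at hK hη
  rw [dist_eq_norm, h1, NNReal.coe_mul, NNReal.coe_add,
    Real.coe_toNNReal _ (inv_nonneg.2 h.pos.le)]
  calc _ ≤ ‖c x - c y‖ * ‖w x‖ + θ⁻¹ * ‖w x - w y‖ :=
        (norm_add_le _ _).trans (add_le_add ((c x - c y).le_opNorm _) (h.norm_apply_le _ _))
    _ ≤ (K * dist x y) * η + θ⁻¹ * (η * dist x y) := by
        gcongr
        · exact hw' x
        · exact inv_nonneg.2 h.pos.le
    _ = _ := by ring

end IsEllipticField

theorem norm_matDiv_le {c : EuclideanSpace ℝ (Fin l) →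
      (EuclideanSpace ℝ (Fin l) →L[ℝ] EuclideanSpace ℝ (Fin l))} {K : ℝ}
    (h : ∀ x, ‖fderiv ℝ c x‖ ≤ K) (x : EuclideanSpace ℝ (Fin l)) : ‖matDiv c x‖ ≤ l * K := by
  refine (norm_sum_le _ _).trans ?_
  calc _ ≤ ∑ _j : Fin l, K := Finset.sum_le_sum fun j _ ↦ ?_
    _ = _ := by simp
  refine (ContinuousLinearMap.le_opNorm _ _).trans ?_
  have := (fderiv ℝ c x).le_opNorm (EuclideanSpace.single j (1 : ℝ))
  simp only [PiLp.norm_single, norm_one, mul_one] at *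
  exact this.trans (h x)

theorem lipschitzWith_matDiv {c : EuclideanSpace ℝ (Fin l) →
      (EuclideanSpace ℝ (Fin l) →L[ℝ] EuclideanSpace ℝ (Fin l))} {K : NNReal}
    (h : LipschitzWith K (fderiv ℝ c)) : LipschitzWith (l * K) (matDiv c) := by
  refine LipschitzWith.of_dist_le_mul fun x y ↦ ?_
  rw [dist_eq_norm, matDiv, matDiv, ← Finset.sum_sub_distrib]
  refine (norm_sum_le _ _).trans ?_
  calc _ ≤ ∑ _j : Fin l, K * dist x y := Finset.sum_le_sum fun j _ ↦ ?_
    _ = _ := by simp [mul_assoc]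
  have e : fderiv ℝ c x (EuclideanSpace.single j 1) (EuclideanSpace.single j 1) -
      fderiv ℝ c y (EuclideanSpace.single j 1) (EuclideanSpace.single j 1) =
      (fderiv ℝ c x - fderiv ℝ c y) (EuclideanSpace.single j 1) (EuclideanSpace.single j 1) := rfl
  rw [e]
  refine (ContinuousLinearMap.le_opNorm _ _).trans ?_
  have := (fderiv ℝ c x - fderiv ℝ c y).le_opNorm (EuclideanSpace.single j (1 : ℝ))
  simp only [PiLp.norm_single, norm_one, mul_one] at *
  refine this.trans ?_
  rw [← dist_eq_norm]
  exact h.dist_le_mul x y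

end Coefficients

section Gradient

variable {E : Type*} [NormedAddCommGroup E] [InnerProductSpace ℝ E] [CompleteSpace E]

theorem HasGradientAt.mul' {f g : E → ℝ} {f' g' x : E} (hf : HasGradientAt f f' x)
    (hg : HasGradientAt g g' x) : HasGradientAt (fun y ↦ f y * g y) (g x • f' + f x • g') x := by
  rw [hasGradientAt_iff_hasFDerivAt] at *
  refine (hf.mul hg).congr_fderiv ?_
  simp [add_comm]

theorem HasDerivAt.comp_hasGradientAt {φ : ℝ → ℝ} {d : ℝ} {f : E → ℝ} {f' x : E}
    (hφ : HasDerivAt φ d (f x)) (hf : HasGradientAt f f' x) :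
    HasGradientAt (fun y ↦ φ (f y)) (d • f') x := by
  rw [hasGradientAt_iff_hasFDerivAt] at *
  refine (hφ.comp_hasFDerivAt x hf).congr_fderiv ?_
  simp

theorem gradient_eq_zero_of_notMem_tsupport {f : E → ℝ} {x : E} (hx : x ∉ tsupport f) :
    gradient f x = 0 := by
  rw [gradient, fderiv_of_notMem_tsupport ℝ hx, map_zero]

/-- Integration by parts against a compactly supported Lipschitz vector field. -/
theorem abs_integral_inner_gradient_le_of_hasCompactSupport {f : EuclideanSpace ℝ (Fin l) → ℝ}
    (hf : ContDiff ℝ 1 f) (hfi : Integrable f)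
    {w : EuclideanSpace ℝ (Fin l) → EuclideanSpace ℝ (Fin l)} {L : NNReal}
    (hw : LipschitzWith L w) (hw' : HasCompactSupport w) :
    |∫ x, ⟪gradient f x, w x⟫| ≤ l * L * ∫ x, |f x| := by
  obtain ⟨R, hR0, hR⟩ := hw'.isCompact.isBounded.subset_closedBall_lt 0
    (0 : EuclideanSpace ℝ (Fin l))
  let χ : ContDiffBump (0 : EuclideanSpace ℝ (Fin l)) := ⟨R + 1, R + 2, by linarith, by linarith⟩
  have hχ : ContDiff ℝ 1 χ := χ.contDiff
  have hc : ContDiff ℝ 1 fun x ↦ χ x * f x := hχ.mul hf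
  have key := abs_integral_inner_gradient_le hc χ.hasCompactSupport.mul_right hw
  have e : ∀ x, ⟪gradient (fun x ↦ χ x * f x) x, w x⟫ = ⟪gradient f x, w x⟫ := fun x ↦ by
    by_cases hx : x ∈ tsupport w
    · have hx1 : x ∈ Metric.ball (0 : EuclideanSpace ℝ (Fin l)) (R + 1) := by
        have := hR hx
        rw [mem_closedBall_zero_iff] at this
        rw [mem_ball_zero_iff]
        linarith
      have h1 : (fun x ↦ χ x * f x) =ᶠ[𝓝 x] f := by
        filter_upwards [χ.eventuallyEq_one_of_mem_ball hx1] with y hy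
        simp [hy]
      rw [gradient, gradient, h1.fderiv_eq]
    · simp [image_eq_zero_of_notMem_tsupport hx]
  simp only [e] at key
  refine key.trans ?_
  refine mul_le_mul_of_nonneg_left ?_ (by positivity)
  refine integral_mono (hc.continuous.integrable_of_hasCompactSupport
    χ.hasCompactSupport.mul_right).abs hfi.abs fun x ↦ ?_
  simp only [abs_mul, abs_of_nonneg χ.nonneg]
  exact mul_le_of_le_one_left (abs_nonneg _) χ.le_one

end Gradient

section Functional

theorem IsEllipticField.mollified_functional_le {θ : ℝ} {K : NNReal}
    {c : EuclideanSpace ℝ (Fin l) → EuclideanSpace ℝ (Fin l) →L[ℝ] EuclideanSpace ℝ (Fin l)}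
    (hc : IsEllipticField θ K c) {V : EuclideanSpace ℝ (Fin l) → EuclideanSpace ℝ (Fin l)}
    {m : EuclideanSpace ℝ (Fin l) → ℝ} {F : ℝ}
    (hV : LocallyIntegrable V) (hm : LocallyIntegrable m) (hm0 : ∀ x, 0 ≤ m x)
    (hF : ∀ h : EuclideanSpace ℝ (Fin l) → ℝ, ContDiff ℝ 1 h → HasCompactSupport h →
      ∫ x, (⟪gradient h x, V x⟫ - 1 / 2 * ⟪c x (gradient h x), gradient h x⟫ * m x) ≤ F)
    {σ : EuclideanSpace ℝ (Fin l) → ℝ} {r : ℝ} (hσ : IsMollifier σ r volume)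
    {k : EuclideanSpace ℝ (Fin l) → ℝ} (hk : ContDiff ℝ 1 k) (hk' : HasCompactSupport k) (a : ℝ) :
    a * (∫ x, ⟪gradient k x, mollify σ volume V x⟫) -
      a ^ 2 / (2 * θ) * ∫ x, ‖gradient k x‖ ^ 2 * mollify σ volume m x ≤ F := by
  have hθ := hc.pos
  set u := gradient k with hu
  have huc : Continuous u := hk.continuous_gradient
  have hus : HasCompactSupport u := hk'.gradient
  have hui : Integrable u := huc.integrable_of_hasCompactSupport hus
  have hu2c : Continuous fun x ↦ ‖u x‖ ^ 2 := huc.norm.pow 2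
  have hu2s : HasCompactSupport fun x ↦ ‖u x‖ ^ 2 :=
    hus.comp_left (g := fun v ↦ ‖v‖ ^ 2) (by simp)
  have hu2i := hu2c.integrable_of_hasCompactSupport (μ := volume) hu2s
  set w := mollify σ volume u with hw
  have hwc : Continuous w := hσ.continuous_mollify hui.locallyIntegrable
  have hws : HasCompactSupport w := hσ.hasCompactSupport_mollify hus
  have hcc : Continuous fun x ↦ ⟪c x (w x), w x⟫ :=
    (hc.lipschitz.continuous.clm_apply hwc).inner hwc
  have hcs : HasCompactSupport fun x ↦ ⟪c x (w x), w x⟫ := by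
    refine hws.mono' (subset_trans ?_ (subset_tsupport _))
    refine Function.support_subset_iff'.2 fun x hx ↦ ?_
    rw [Function.notMem_support.1 hx, inner_zero_right]
  have hgrad : ∀ x, gradient (fun x ↦ a * mollify σ volume k x) x = a • w x := fun x ↦ by
    have h1 : HasDerivAt (fun s : ℝ ↦ a * s) a (mollify σ volume k x) := by
      simpa using (hasDerivAt_id (mollify σ volume k x)).const_mul a
    exact (h1.comp_hasGradientAt (hk.hasWeakGrad_gradient.hasGradientAt_mollify hσ x)).gradient
  have hi1 : Integrable fun x ↦ ⟪w x, V x⟫ := hV.integrable_inner hwc hws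
  have hi2 : Integrable fun x ↦ ⟪c x (w x), w x⟫ * m x := by
    simpa only [smul_eq_mul] using hm.integrable_smul_left_of_hasCompactSupport hcc hcs
  have hvc : Continuous (mollify σ volume fun x ↦ ‖u x‖ ^ 2) :=
    hσ.continuous_mollify hu2i.locallyIntegrable
  have hi3 : Integrable fun x ↦ mollify σ volume (fun x ↦ ‖u x‖ ^ 2) x * m x := by
    simpa only [smul_eq_mul] using
      hm.integrable_smul_left_of_hasCompactSupport hvc (hσ.hasCompactSupport_mollify hu2s)
  have key := hF (fun x ↦ a * mollify σ volume k x)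
    (contDiff_const.mul ((hσ.contDiff_mollify hk.continuous.locallyIntegrable).of_le
      (by exact_mod_cast le_top))) (hσ.hasCompactSupport_mollify hk').mul_left
  rw [← hσ.integral_inner_mollify hui hus hV, ← hσ.integral_mollify_mul hu2i hu2s hm]
  refine le_trans ?_ key
  rw [← integral_const_mul, ← integral_const_mul,
    ← integral_sub (hi1.const_mul a) (hi3.const_mul _)]
  simp only [hgrad, map_smul, inner_smul_left, inner_smul_right, conj_trivial]
  refine integral_mono ((hi1.const_mul a).sub (hi3.const_mul _)) ?_ fun x ↦ ?_
  · have := (hi1.const_mul a).sub (hi2.const_mul (a ^ 2 / 2))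
    refine this.congr (Eventually.of_forall fun x ↦ ?_)
    simp only [Pi.sub_apply]
    ring
  · have h1 : ⟪c x (w x), w x⟫ ≤ θ⁻¹ * mollify σ volume (fun x ↦ ‖u x‖ ^ 2) x := by
      refine (hc.upper x (w x)).trans ?_
      gcongr
      exact hσ.sq_norm_mollify_le hui.locallyIntegrable hu2i.locallyIntegrable x
    have h2 := mul_le_mul_of_nonneg_left (mul_le_mul_of_nonneg_right h1 (hm0 x))
      (show 0 ≤ a ^ 2 / 2 by positivity)
    have e : a ^ 2 / (2 * θ) * (mollify σ volume (fun x ↦ ‖u x‖ ^ 2) x * m x) =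
      a ^ 2 / 2 * (θ⁻¹ * mollify σ volume (fun x ↦ ‖u x‖ ^ 2) x * m x) := by
      field_simp
    simp only [e]
    linarith

end Functional

section Energy

/-- A bounded substitute `φ` for the logarithm, such that `φ` and `Φ` have derivatives `g r` and
`r * g r`. -/
structure IsTruncatedLog (M : ℝ) (φ g Φ : ℝ → ℝ) : Prop where
  contDiffAt : ∀ r, 0 ≤ r → ContDiffAt ℝ 1 φ r
  contDiffAt_primitive : ∀ r, 0 ≤ r → ContDiffAt ℝ 1 Φ r
  continuousAt : ∀ r, 0 ≤ r → ContinuousAt g r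
  hasDerivAt : ∀ r, 0 ≤ r → HasDerivAt φ (g r) r
  hasDerivAt_primitive : ∀ r, 0 ≤ r → HasDerivAt Φ (r * g r) r
  nonneg : ∀ r, 0 ≤ r → 0 ≤ g r
  mul_le_one : ∀ r, 0 ≤ r → r * g r ≤ 1
  abs_le : ∀ r, 0 ≤ r → |φ r| ≤ M
  primitive_nonneg : ∀ r, 0 ≤ r → 0 ≤ Φ r
  primitive_le : ∀ r, 0 ≤ r → Φ r ≤ r

/-- A cutoff function with `(1 + |x|) |∇ψ|` and the Lipschitz constant of `∇ψ` at most `η`. -/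
structure IsCutoff {E : Type*} [NormedAddCommGroup E] [InnerProductSpace ℝ E] [CompleteSpace E]
    (η : NNReal) (ψ : E → ℝ) : Prop where
  contDiff : ContDiff ℝ 1 ψ
  hasCompactSupport : HasCompactSupport ψ
  nonneg : ∀ x, 0 ≤ ψ x
  le_one : ∀ x, ψ x ≤ 1
  norm_gradient_mul_le : ∀ x, ‖gradient ψ x‖ * (1 + ‖x‖) ≤ η
  lipschitz : LipschitzWith η (gradient ψ)

theorem IsCutoff.norm_gradient_le {E : Type*} [NormedAddCommGroup E] [InnerProductSpace ℝ E]
    [CompleteSpace E] {η : NNReal} {ψ : E → ℝ} (h : IsCutoff η ψ) (x : E) :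
    ‖gradient ψ x‖ ≤ η := by
  have h1 := h.norm_gradient_mul_le x
  nlinarith [norm_nonneg (gradient ψ x), norm_nonneg x,
    mul_nonneg (norm_nonneg (gradient ψ x)) (norm_nonneg x)]

theorem IsEllipticField.locallyIntegrable_flux {θ : ℝ} {K : NNReal}
    {c : EuclideanSpace ℝ (Fin l) → EuclideanSpace ℝ (Fin l) →L[ℝ] EuclideanSpace ℝ (Fin l)}
    (hc : IsEllipticField θ K c) {g : EuclideanSpace ℝ (Fin l) → EuclideanSpace ℝ (Fin l)}
    (hg : LocallyIntegrable g) : LocallyIntegrable fun x ↦ c x (g x) := by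
  refine (hg.smul θ⁻¹).mono ?_ (Eventually.of_forall fun x ↦ ?_)
  · exact (isBoundedBilinearMap_apply (𝕜 := ℝ) (E := EuclideanSpace ℝ (Fin l))
      (F := EuclideanSpace ℝ (Fin l))).continuous.comp_aestronglyMeasurable
      (hc.lipschitz.continuous.aestronglyMeasurable.prodMk hg.aestronglyMeasurable)
  · rw [Pi.smul_apply, norm_smul, Real.norm_of_nonneg (inv_nonneg.2 hc.pos.le)]
    exact hc.norm_apply_le _ _

theorem IsEllipticField.inner_lower_bound {E : Type*} [NormedAddCommGroup E]
    [InnerProductSpace ℝ E] {θ : ℝ} {K : NNReal} {c : E → E →L[ℝ] E} (hc : IsEllipticField θ K c)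
    {x D d b v : E} {ψ g φ Φ μ e : ℝ} (hψg : 0 ≤ ψ * g)
    (hd : |φ * μ - Φ| * (‖d‖ * ‖b‖) ≤ e) :
    θ / 2 * (ψ * g * ‖D‖ ^ 2) + 1 / 2 * ⟪φ • D, c x d⟫ + ⟪(ψ * (μ * g)) • D + Φ • d, b⟫ - e -
      ‖(ψ * g) • D + φ • d‖ * ‖v - ((1 / 2 : ℝ) • c x D + μ • b)‖ ≤
      ⟪(ψ * g) • D + φ • d, v⟫ := by
  set u := (ψ * g) • D + φ • d with hu
  set E' := v - ((1 / 2 : ℝ) • c x D + μ • b) with hE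
  have hv : v = (1 / 2 : ℝ) • c x D + μ • b + E' := by rw [hE]; abel
  have h1 : -(‖u‖ * ‖E'‖) ≤ ⟪u, E'⟫ := neg_le_of_abs_le (abs_real_inner_le_norm _ _)
  have h2 : -e ≤ (φ * μ - Φ) * ⟪d, b⟫ := by
    refine neg_le_of_abs_le (le_trans ?_ hd)
    rw [abs_mul]
    gcongr
    exact abs_real_inner_le_norm _ _
  have h3 := mul_le_mul_of_nonneg_left (hc.lower x D) hψg
  have h4 : ⟪D, c x D⟫ = ⟪c x D, D⟫ := real_inner_comm _ _
  have h5 : ⟪d, c x D⟫ = ⟪D, c x d⟫ := by rw [real_inner_comm, hc.symm]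
  have h6 : ⟪u, v⟫ = 1 / 2 * (ψ * g * ⟪c x D, D⟫) + 1 / 2 * (φ * ⟪D, c x d⟫) +
      (ψ * g * μ * ⟪D, b⟫ + φ * μ * ⟪d, b⟫) + ⟪u, E'⟫ := by
    rw [hv, inner_add_right u _ E', hu]
    simp only [inner_add_left, inner_add_right, inner_smul_left, inner_smul_right, conj_trivial,
      h4, h5]
    ring
  rw [h6]
  simp only [inner_add_left, inner_smul_left, conj_trivial]
  linarith

end Energy

section MollifiedEnergy

set_option linter.unusedSectionVars false

variable {E : Type*} [NormedAddCommGroup E] [InnerProductSpace ℝ E] [FiniteDimensional ℝ E]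

namespace IsTruncatedLog

variable {M : ℝ} {φ g Φ : ℝ → ℝ} {η : NNReal} {ψ μ : E → ℝ}

theorem bound_nonneg (h : IsTruncatedLog M φ g Φ) : 0 ≤ M :=
  (abs_nonneg _).trans (h.abs_le 0 le_rfl)

theorem contDiff_comp (h : IsTruncatedLog M φ g Φ) (hμ : ContDiff ℝ 1 μ) (hμ0 : ∀ x, 0 ≤ μ x) :
    ContDiff ℝ 1 fun x ↦ φ (μ x) :=
  contDiff_iff_contDiffAt.2 fun x ↦ (h.contDiffAt _ (hμ0 x)).comp x hμ.contDiffAt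

theorem contDiff_primitive_comp (h : IsTruncatedLog M φ g Φ) (hμ : ContDiff ℝ 1 μ)
    (hμ0 : ∀ x, 0 ≤ μ x) : ContDiff ℝ 1 fun x ↦ Φ (μ x) :=
  contDiff_iff_contDiffAt.2 fun x ↦ (h.contDiffAt_primitive _ (hμ0 x)).comp x hμ.contDiffAt

theorem continuous_comp (h : IsTruncatedLog M φ g Φ) (hμ : Continuous μ) (hμ0 : ∀ x, 0 ≤ μ x) :
    Continuous fun x ↦ g (μ x) :=
  continuous_iff_continuousAt.2 fun x ↦ (h.continuousAt _ (hμ0 x)).comp hμ.continuousAt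

theorem gradient_mul_comp (h : IsTruncatedLog M φ g Φ) (hψ : ContDiff ℝ 1 ψ)
    (hμ : ContDiff ℝ 1 μ) (hμ0 : ∀ x, 0 ≤ μ x) (x : E) :
    gradient (fun x ↦ ψ x * φ (μ x)) x =
      (ψ x * g (μ x)) • gradient μ x + φ (μ x) • gradient ψ x := by
  rw [((hψ.hasGradientAt x).mul' ((h.hasDerivAt _ (hμ0 x)).comp_hasGradientAt
    (hμ.hasGradientAt x))).gradient, smul_smul, add_comm]

theorem gradient_mul_primitive_comp (h : IsTruncatedLog M φ g Φ) (hψ : ContDiff ℝ 1 ψ)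
    (hμ : ContDiff ℝ 1 μ) (hμ0 : ∀ x, 0 ≤ μ x) (x : E) :
    gradient (fun x ↦ ψ x * Φ (μ x)) x =
      (ψ x * (μ x * g (μ x))) • gradient μ x + Φ (μ x) • gradient ψ x := by
  rw [((hψ.hasGradientAt x).mul' ((h.hasDerivAt_primitive _ (hμ0 x)).comp_hasGradientAt
    (hμ.hasGradientAt x))).gradient, smul_smul, add_comm]

theorem gradient_mul_sub_primitive (h : IsTruncatedLog M φ g Φ) (hμ : ContDiff ℝ 1 μ)
    (hμ0 : ∀ x, 0 ≤ μ x) (x : E) :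
    gradient (fun x ↦ μ x * φ (μ x) - Φ (μ x)) x = φ (μ x) • gradient μ x := by
  have h1 : HasDerivAt (fun s ↦ s * φ s - Φ s) (φ (μ x)) (μ x) := by
    refine (((hasDerivAt_id (μ x)).mul (h.hasDerivAt _ (hμ0 x))).sub
      (h.hasDerivAt_primitive _ (hμ0 x))).congr_deriv ?_
    simp
  exact (h1.comp_hasGradientAt (hμ.hasGradientAt x)).gradient

theorem abs_mul_sub_primitive_le (h : IsTruncatedLog M φ g Φ) {r : ℝ} (hr : 0 ≤ r) :
    |r * φ r - Φ r| ≤ (M + 1) * r := by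
  refine (abs_sub _ _).trans ?_
  rw [abs_mul, abs_of_nonneg hr, abs_of_nonneg (h.primitive_nonneg r hr)]
  linarith [h.primitive_le r hr, mul_le_mul_of_nonneg_left (h.abs_le r hr) hr]

theorem norm_smul_gradient_le (h : IsTruncatedLog M φ g Φ) (hψ : IsCutoff η ψ)
    (hη : (M + 1) * η ≤ 1) {r : ℝ} (hr : 0 ≤ r) (x : E) : ‖φ r • gradient ψ x‖ ≤ 1 := by
  rw [norm_smul, Real.norm_eq_abs]
  calc _ ≤ M * η := mul_le_mul (h.abs_le r hr) (hψ.norm_gradient_le x) (norm_nonneg _)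
        h.bound_nonneg
    _ ≤ 1 := by linarith [η.2]

theorem norm_gradient_mul_comp_le (h : IsTruncatedLog M φ g Φ) (hψ : IsCutoff η ψ)
    (hη : (M + 1) * η ≤ 1) (hμ : ContDiff ℝ 1 μ) (hμ0 : ∀ x, 0 ≤ μ x) (x : E) :
    ‖gradient (fun x ↦ ψ x * φ (μ x)) x‖ ≤ g (μ x) * ‖gradient μ x‖ + 1 := by
  rw [h.gradient_mul_comp hψ.contDiff hμ hμ0]
  refine (norm_add_le _ _).trans
    (add_le_add ?_ (h.norm_smul_gradient_le hψ hη (hμ0 x) x))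
  rw [norm_smul, Real.norm_of_nonneg (mul_nonneg (hψ.nonneg x) (h.nonneg _ (hμ0 x)))]
  gcongr
  exact mul_le_of_le_one_left (h.nonneg _ (hμ0 x)) (hψ.le_one x)

theorem sq_norm_gradient_mul_le (h : IsTruncatedLog M φ g Φ) (hψ : IsCutoff η ψ)
    (hη : (M + 1) * η ≤ 1) (hμ : ContDiff ℝ 1 μ) (hμ0 : ∀ x, 0 ≤ μ x) (x : E) :
    ‖gradient (fun x ↦ ψ x * φ (μ x)) x‖ ^ 2 * μ x ≤
      2 * (ψ x * g (μ x) * ‖gradient μ x‖ ^ 2) + 2 * μ x := by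
  rw [h.gradient_mul_comp hψ.contDiff hμ hμ0]
  have h0 := hμ0 x
  have hg := h.nonneg _ h0
  have hψ0 := hψ.nonneg x
  set p := (ψ x * g (μ x)) • gradient μ x with hp
  set q := φ (μ x) • gradient ψ x with hq
  have hq1 : ‖q‖ ≤ 1 := h.norm_smul_gradient_le hψ hη h0 x
  have h1 : ‖p + q‖ ^ 2 ≤ 2 * ‖p‖ ^ 2 + 2 * ‖q‖ ^ 2 := by
    have := parallelogram_law_with_norm ℝ p q
    nlinarith [mul_self_nonneg ‖p - q‖]
  have h2 : ‖p‖ ^ 2 * μ x ≤ ψ x * g (μ x) * ‖gradient μ x‖ ^ 2 := by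
    rw [hp, norm_smul, Real.norm_of_nonneg (mul_nonneg hψ0 hg)]
    calc _ = ψ x * g (μ x) * ‖gradient μ x‖ ^ 2 * (ψ x * (μ x * g (μ x))) := by ring
      _ ≤ ψ x * g (μ x) * ‖gradient μ x‖ ^ 2 * 1 := by
        gcongr
        exact mul_le_one₀ (hψ.le_one x) (mul_nonneg h0 hg) (h.mul_le_one _ h0)
      _ = _ := mul_one _
  have h3 : ‖q‖ ^ 2 * μ x ≤ μ x :=
    mul_le_of_le_one_left h0 (pow_le_one₀ (norm_nonneg _) hq1)
  calc _ ≤ (2 * ‖p‖ ^ 2 + 2 * ‖q‖ ^ 2) * μ x := mul_le_mul_of_nonneg_right h1 h0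
    _ ≤ _ := by linarith

variable [MeasurableSpace E] [BorelSpace E] {ν : Measure E} [IsFiniteMeasureOnCompacts ν]

theorem integrable_energy (h : IsTruncatedLog M φ g Φ) (hψ : IsCutoff η ψ)
    (hμ : ContDiff ℝ 1 μ) (hμ0 : ∀ x, 0 ≤ μ x) :
    Integrable (fun x ↦ ψ x * g (μ x) * ‖gradient μ x‖ ^ 2) ν :=
  ((hψ.contDiff.continuous.mul (h.continuous_comp hμ.continuous hμ0)).mul
    (hμ.continuous_gradient.norm.pow 2)).integrable_of_hasCompactSupport
    hψ.hasCompactSupport.mul_right.mul_right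

theorem integral_sq_norm_gradient_mul_le (h : IsTruncatedLog M φ g Φ) (hψ : IsCutoff η ψ)
    (hη : (M + 1) * η ≤ 1) (hμ : ContDiff ℝ 1 μ) (hμ0 : ∀ x, 0 ≤ μ x) (hμi : Integrable μ ν)
    (hμ1 : ∫ x, μ x ∂ν = 1) :
    ∫ x, ‖gradient (fun x ↦ ψ x * φ (μ x)) x‖ ^ 2 * μ x ∂ν ≤
      2 * (∫ x, ψ x * g (μ x) * ‖gradient μ x‖ ^ 2 ∂ν) + 2 := by
  have i1 := (h.integrable_energy (ν := ν) hψ hμ hμ0).const_mul 2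
  have i2 := hμi.const_mul 2
  have hk : ContDiff ℝ 1 fun x ↦ ψ x * φ (μ x) := hψ.contDiff.mul (h.contDiff_comp hμ hμ0)
  have hks : HasCompactSupport fun x ↦ ψ x * φ (μ x) := hψ.hasCompactSupport.mul_right
  have hi : Integrable (fun x ↦ ‖gradient (fun x ↦ ψ x * φ (μ x)) x‖ ^ 2 * μ x) ν := by
    refine ((hk.continuous_gradient.norm.pow 2).mul
      hμ.continuous).integrable_of_hasCompactSupport (HasCompactSupport.intro hks fun x hx ↦ ?_)
    simp [gradient_eq_zero_of_notMem_tsupport hx]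
  refine (integral_mono hi (i1.add i2) (h.sq_norm_gradient_mul_le hψ hη hμ hμ0)).trans_eq ?_
  simp only [Pi.add_apply]
  rw [integral_add i1 i2, integral_const_mul, integral_const_mul, hμ1, mul_one]

end IsTruncatedLog

end MollifiedEnergy

section EnergyInequality

variable {θ B M r F : ℝ} {K η : NNReal} {ψ μ m J τ σ : EuclideanSpace ℝ (Fin l) → ℝ}
  {φ g Φ : ℝ → ℝ}
  {c : EuclideanSpace ℝ (Fin l) → EuclideanSpace ℝ (Fin l) →L[ℝ] EuclideanSpace ℝ (Fin l)}
  {b W Dm : EuclideanSpace ℝ (Fin l) → EuclideanSpace ℝ (Fin l)}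

theorem integral_add_add_sub_sub {α : Type*} [MeasurableSpace α] {ν : Measure α}
    {f₁ f₂ f₃ f₄ f₅ : α → ℝ} (h₁ : Integrable f₁ ν) (h₂ : Integrable f₂ ν) (h₃ : Integrable f₃ ν)
    (h₄ : Integrable f₄ ν) (h₅ : Integrable f₅ ν) :
    ∫ x, (f₁ x + f₂ x + f₃ x - f₄ x - f₅ x) ∂ν =
      (∫ x, f₁ x ∂ν) + (∫ x, f₂ x ∂ν) + (∫ x, f₃ x ∂ν) - (∫ x, f₄ x ∂ν) - ∫ x, f₅ x ∂ν := by
  have h₁₂ : Integrable (fun x ↦ f₁ x + f₂ x) ν := h₁.add h₂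
  have h₁₃ : Integrable (fun x ↦ f₁ x + f₂ x + f₃ x) ν := h₁₂.add h₃
  have h₁₄ : Integrable (fun x ↦ f₁ x + f₂ x + f₃ x - f₄ x) ν := h₁₃.sub h₄
  rw [integral_sub h₁₄ h₅, integral_sub h₁₃ h₄, integral_add h₁₂ h₃, integral_add h₁ h₂]

theorem IsEllipticField.norm_mollify_flux_sub_le (hc : IsEllipticField θ K c)
    (hb : LipschitzWith K b) (hm : LocallyIntegrable m) (hm0 : ∀ x, 0 ≤ m x)
    (hDm : LocallyIntegrable Dm) (hσ : IsMollifier σ r volume) (x : EuclideanSpace ℝ (Fin l)) :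
    ‖mollify σ volume (fun x ↦ (1 / 2 : ℝ) • c x (Dm x) + m x • b x) x -
        ((1 / 2 : ℝ) • c x (mollify σ volume Dm x) + mollify σ volume m x • b x)‖ ≤
      r * K * mollify σ volume (fun y ↦ ‖Dm y‖) x + r * K * mollify σ volume m x := by
  have hcD := hc.locallyIntegrable_flux hDm
  have hmb : LocallyIntegrable fun x ↦ m x • b x :=
    LocallyIntegrable.smul_continuous hb.continuous hm
  rw [hσ.mollify_add (f := fun x ↦ (1 / 2 : ℝ) • c x (Dm x)) (hcD.smul (1 / 2 : ℝ)) hmb,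
    IsMollifier.mollify_const_smul, add_sub_add_comm, ← smul_sub]
  have h1 := hσ.norm_mollify_clm_apply_sub_le hDm hc.lipschitz hcD x
  have h2 := hσ.norm_mollify_clm_apply_sub_le hm hb.toSpanSingleton
    (by simpa only [ContinuousLinearMap.toSpanSingleton_apply] using hmb) x
  simp only [ContinuousLinearMap.toSpanSingleton_apply, Real.norm_of_nonneg (hm0 _)] at h2
  refine (norm_add_le _ _).trans ?_
  rw [norm_smul]
  refine add_le_add (le_trans ?_ h1) h2
  refine mul_le_of_le_one_left (norm_nonneg _) ?_
  norm_num

theorem IsTruncatedLog.neg_le_integral_inner_gradient_cutoff (h : IsTruncatedLog M φ g Φ)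
    (hc : IsEllipticField θ K c) (hψ : IsCutoff η ψ) (hη : (M + 1) * η ≤ 1)
    (hμ : ContDiff ℝ 1 μ) (hμ0 : ∀ x, 0 ≤ μ x) (hμi : Integrable μ) (hμ1 : ∫ x, μ x = 1) :
    Integrable (fun x ↦ ⟪φ (μ x) • gradient μ x, c x (gradient ψ x)⟫) ∧
      -(l * (K + θ⁻¹)) ≤ ∫ x, ⟪φ (μ x) • gradient μ x, c x (gradient ψ x)⟫ := by
  set f : EuclideanSpace ℝ (Fin l) → ℝ := fun x ↦ μ x * φ (μ x) - Φ (μ x) with hf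
  have hfC : ContDiff ℝ 1 f :=
    (hμ.mul (h.contDiff_comp hμ hμ0)).sub (h.contDiff_primitive_comp hμ hμ0)
  have hfle : ∀ x, |f x| ≤ (M + 1) * μ x := fun x ↦ by
    rw [hf]; exact h.abs_mul_sub_primitive_le (hμ0 x)
  have hfi : Integrable f :=
    (hμi.const_mul (M + 1)).mono' hfC.continuous.aestronglyMeasurable
      (Eventually.of_forall hfle)
  have hg : ∀ x, φ (μ x) • gradient μ x = gradient f x := fun x ↦
    (h.gradient_mul_sub_primitive hμ hμ0 x).symm
  have hw := hc.lipschitz_apply hψ.lipschitz hψ.norm_gradient_le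
  have hws : HasCompactSupport fun x ↦ c x (gradient ψ x) := by
    refine HasCompactSupport.intro hψ.hasCompactSupport fun x hx ↦ ?_
    simp [gradient_eq_zero_of_notMem_tsupport hx]
  simp only [hg]
  constructor
  · have := (hfC.continuous_gradient.locallyIntegrable (μ := volume)).integrable_inner
      hw.continuous hws
    simpa only [real_inner_comm] using this
  have h1 := abs_integral_inner_gradient_le_of_hasCompactSupport hfC hfi hw hws
  have h2 : ∫ x, |f x| ≤ M + 1 := by
    refine (integral_mono hfi.abs (hμi.const_mul (M + 1)) hfle).trans_eq ?_
    rw [integral_const_mul, hμ1, mul_one]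
  have hθ := inv_nonneg.2 hc.pos.le
  refine le_trans ?_ (neg_le_of_abs_le h1)
  rw [neg_le_neg_iff]
  push_cast
  rw [Real.coe_toNNReal _ hθ]
  calc _ ≤ l * ((K + θ⁻¹) * η) * (M + 1) := by gcongr
    _ = l * (K + θ⁻¹) * ((M + 1) * η) := by ring
    _ ≤ l * (K + θ⁻¹) * 1 := by gcongr
    _ = _ := mul_one _

theorem IsTruncatedLog.neg_le_integral_inner_gradient_primitive (h : IsTruncatedLog M φ g Φ)
    (hb : LipschitzWith K b) (hψ : IsCutoff η ψ)
    (hμ : ContDiff ℝ 1 μ) (hμ0 : ∀ x, 0 ≤ μ x) (hμi : Integrable μ) (hμ1 : ∫ x, μ x = 1) :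
    Integrable (fun x ↦ ⟪gradient (fun x ↦ ψ x * Φ (μ x)) x, b x⟫) ∧
      -(l * K : ℝ) ≤ ∫ x, ⟪gradient (fun x ↦ ψ x * Φ (μ x)) x, b x⟫ := by
  have hfC : ContDiff ℝ 1 fun x ↦ ψ x * Φ (μ x) :=
    hψ.contDiff.mul (h.contDiff_primitive_comp hμ hμ0)
  have hfs : HasCompactSupport fun x ↦ ψ x * Φ (μ x) := hψ.hasCompactSupport.mul_right
  refine ⟨(hb.continuous.locallyIntegrable (μ := volume)).integrable_inner
    hfC.continuous_gradient hfs.gradient, ?_⟩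
  refine le_trans ?_ (neg_le_of_abs_le (abs_integral_inner_gradient_le hfC hfs hb))
  rw [neg_le_neg_iff]
  refine mul_le_of_le_one_right (by positivity) ?_
  rw [← hμ1]
  refine integral_mono (hfC.continuous.integrable_of_hasCompactSupport hfs).abs hμi fun x ↦ ?_
  have h1 := h.primitive_nonneg _ (hμ0 x)
  rw [abs_of_nonneg (mul_nonneg (hψ.nonneg x) h1)]
  exact (mul_le_of_le_one_left h1 (hψ.le_one x)).trans (h.primitive_le _ (hμ0 x))

theorem IsTruncatedLog.le_integral_inner_gradient (h : IsTruncatedLog M φ g Φ)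
    (hc : IsEllipticField θ K c) (hb : LipschitzWith K b) (hB : 0 ≤ B)
    (hbB : ∀ x, ‖b x‖ ≤ B * (1 + ‖x‖)) (hψ : IsCutoff η ψ) (hη : (M + 1) * η ≤ 1)
    (hμ : ContDiff ℝ 1 μ) (hμ0 : ∀ x, 0 ≤ μ x) (hμi : Integrable μ) (hμ1 : ∫ x, μ x = 1)
    (hW : Continuous W) (hτi : Integrable τ) (hτ1 : ∫ x, τ x ≤ 1)
    (hτ : ∀ x, ‖gradient (fun x ↦ ψ x * φ (μ x)) x‖ *
      ‖W x - ((1 / 2 : ℝ) • c x (gradient μ x) + μ x • b x)‖ ≤ τ x) :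
    θ / 2 * (∫ x, ψ x * g (μ x) * ‖gradient μ x‖ ^ 2) -
        (l * K + 1 / 2 * (l * (K + θ⁻¹)) + B + 1) ≤
      ∫ x, ⟪gradient (fun x ↦ ψ x * φ (μ x)) x, W x⟫ := by
  obtain ⟨i2, h2⟩ := h.neg_le_integral_inner_gradient_cutoff hc hψ hη hμ hμ0 hμi hμ1
  obtain ⟨i3, h3⟩ := h.neg_le_integral_inner_gradient_primitive hb hψ hμ hμ0 hμi hμ1
  have i1 : Integrable fun x ↦ θ / 2 * (ψ x * g (μ x) * ‖gradient μ x‖ ^ 2) :=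
    (h.integrable_energy hψ hμ hμ0).const_mul _
  have i2' := i2.const_mul (1 / 2)
  have i4 := hμi.const_mul B
  have hkC : ContDiff ℝ 1 fun x ↦ ψ x * φ (μ x) := hψ.contDiff.mul (h.contDiff_comp hμ hμ0)
  have hks : HasCompactSupport fun x ↦ ψ x * φ (μ x) := hψ.hasCompactSupport.mul_right
  have i5 : Integrable fun x ↦ ⟪gradient (fun x ↦ ψ x * φ (μ x)) x, W x⟫ :=
    (hW.locallyIntegrable (μ := volume)).integrable_inner hkC.continuous_gradient hks.gradient
  have hpt : ∀ x, θ / 2 * (ψ x * g (μ x) * ‖gradient μ x‖ ^ 2) +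
      1 / 2 * ⟪φ (μ x) • gradient μ x, c x (gradient ψ x)⟫ +
      ⟪gradient (fun x ↦ ψ x * Φ (μ x)) x, b x⟫ - B * μ x - τ x ≤
      ⟪gradient (fun x ↦ ψ x * φ (μ x)) x, W x⟫ := fun x ↦ by
    have h4 : |φ (μ x) * μ x - Φ (μ x)| * (‖gradient ψ x‖ * ‖b x‖) ≤ B * μ x := by
      have h5 : ‖gradient ψ x‖ * ‖b x‖ ≤ B * η := by
        calc _ ≤ ‖gradient ψ x‖ * (B * (1 + ‖x‖)) := by gcongr; exact hbB x
          _ = B * (‖gradient ψ x‖ * (1 + ‖x‖)) := by ring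
          _ ≤ _ := by gcongr; exact hψ.norm_gradient_mul_le x
      rw [mul_comm (φ _)]
      have hM := h.bound_nonneg
      have h0 := hμ0 x
      calc _ ≤ ((M + 1) * μ x) * (B * η) := by
            gcongr
            exact h.abs_mul_sub_primitive_le h0
        _ = B * μ x * ((M + 1) * η) := by ring
        _ ≤ B * μ x * 1 := by gcongr
        _ = _ := mul_one _
    have h6 := hc.inner_lower_bound (x := x) (D := gradient μ x) (v := W x)
      (mul_nonneg (hψ.nonneg x) (h.nonneg _ (hμ0 x))) h4
    have h7 := hτ x
    rw [h.gradient_mul_comp hψ.contDiff hμ hμ0] at h7 ⊢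
    rw [h.gradient_mul_primitive_comp hψ.contDiff hμ hμ0]
    linarith
  have key := integral_mono ((((i1.add i2').add i3).sub i4).sub hτi) i5 hpt
  simp only [Pi.add_apply, Pi.sub_apply] at key
  rw [integral_add_add_sub_sub i1 i2' i3 i4 hτi, integral_const_mul, integral_const_mul,
    integral_const_mul, hμ1] at key
  linarith

end EnergyInequality

section MollifiedEnergyBound

variable {θ B M r R F : ℝ} {K η : NNReal} {ψ m J σ : EuclideanSpace ℝ (Fin l) → ℝ}
  {φ g Φ : ℝ → ℝ}
  {c : EuclideanSpace ℝ (Fin l) → EuclideanSpace ℝ (Fin l) →L[ℝ] EuclideanSpace ℝ (Fin l)}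
  {b Dm : EuclideanSpace ℝ (Fin l) → EuclideanSpace ℝ (Fin l)}

theorem IsTruncatedLog.commutator_le (h : IsTruncatedLog M φ g Φ) (hσ : IsMollifier σ r volume)
    (hm : LocallyIntegrable m) (hDm : LocallyIntegrable Dm) (hm0 : ∀ x, 0 ≤ m x)
    (hJ : LocallyIntegrable J) (hJ0 : ∀ x, 0 ≤ J x) (hle : ∀ᵐ x, ‖Dm x‖ ^ 2 ≤ J x * m x)
    (hr : 0 ≤ r) (x : EuclideanSpace ℝ (Fin l)) :
    (g (mollify σ volume m x) * ‖mollify σ volume Dm x‖ + 1) *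
        (r * K * mollify σ volume (fun y ↦ ‖Dm y‖) x + r * K * mollify σ volume m x) ≤
      r * K * mollify σ volume (fun y ↦ J y + 2 * ‖Dm y‖ + m y) x := by
  have hN := hDm.norm
  have h2N : LocallyIntegrable fun y ↦ 2 * ‖Dm y‖ := hN.smul (2 : ℝ)
  have hJN : LocallyIntegrable fun y ↦ J y + 2 * ‖Dm y‖ := hJ.add h2N
  rw [hσ.mollify_add hJN hm, hσ.mollify_add hJ h2N, IsMollifier.mollify_const_mul]
  have hμ0 := hσ.mollify_nonneg hm0 x
  have hn : ‖mollify σ volume Dm x‖ ≤ mollify σ volume (fun y ↦ ‖Dm y‖) x :=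
    hσ.norm_mollify_le x
  have hg := h.nonneg _ hμ0
  have hg1 := h.mul_le_one _ hμ0
  have h1 := hσ.mul_sq_mollify_le hN hJ hm hJ0 hm0 hle hg x (by linarith)
  set N := mollify σ volume (fun y ↦ ‖Dm y‖) x
  set ρ := mollify σ volume m x
  have hN0 : 0 ≤ N := (norm_nonneg _).trans hn
  calc _ ≤ (g ρ * N + 1) * (r * K * N + r * K * ρ) := by gcongr
    _ = r * K * (g ρ * N ^ 2 + N * (ρ * g ρ) + N + ρ) := by ring
    _ ≤ r * K * (mollify σ volume J x + N * 1 + N + ρ) := by gcongr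
    _ = _ := by ring

theorem IsEllipticField.mollified_energy_le (hc : IsEllipticField θ K c)
    (hb : LipschitzWith K b) (hB : 0 ≤ B) (hbB : ∀ x, ‖b x‖ ≤ B * (1 + ‖x‖))
    (hw : HasWeakGrad m Dm) (hm0 : ∀ x, 0 ≤ m x) (hm1 : ∫ x, m x = 1)
    (hJ : LocallyIntegrable J) (hJ0 : ∀ x, 0 ≤ J x) (hle : ∀ᵐ x, ‖Dm x‖ ^ 2 ≤ J x * m x)
    (hF : ∀ h : EuclideanSpace ℝ (Fin l) → ℝ, ContDiff ℝ 1 h → HasCompactSupport h →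
      ∫ x, (⟪gradient h x, (1 / 2 : ℝ) • c x (Dm x) + m x • b x⟫ -
        1 / 2 * ⟪c x (gradient h x), gradient h x⟫ * m x) ≤ F)
    (hσ : IsMollifier σ r volume) (hr : 0 ≤ r) (hr1 : r ≤ 1) (hφ : IsTruncatedLog M φ g Φ)
    (hψ : IsCutoff η ψ) (hη : (M + 1) * η ≤ 1) (hR : tsupport ψ ⊆ Metric.closedBall 0 R)
    (hX : r * (K * ∫ x in Metric.closedBall 0 (R + 1), (J x + 2 * ‖Dm x‖ + m x)) ≤ 1) :
    θ ^ 3 / 16 * (∫ x, ψ x * g (mollify σ volume m x) * ‖mollify σ volume Dm x‖ ^ 2) ≤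
      F + (θ ^ 2 / 4 * (l * K + 1 / 2 * (l * (K + θ⁻¹)) + B + 1) + θ ^ 3 / 16) := by
  have hθ := hc.pos
  have hm := hw.1
  have hDm := hw.2.1
  have hmi : Integrable m := by
    by_contra hmi
    rw [integral_undef hmi] at hm1
    exact zero_ne_one hm1
  have hμC : ContDiff ℝ 1 (mollify σ volume m) := (hσ.contDiff_mollify hm).of_le (by simp)
  have hμ0 := hσ.mollify_nonneg hm0
  have hμi := hσ.integrable_mollify hmi
  have hμ1 : ∫ x, mollify σ volume m x = 1 := by rw [hσ.integral_mollify hmi, hm1]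
  have hgr := hw.gradient_mollify hσ
  have hV : LocallyIntegrable fun x ↦ (1 / 2 : ℝ) • c x (Dm x) + m x • b x :=
    ((hc.locallyIntegrable_flux hDm).smul (1 / 2 : ℝ)).add
      (LocallyIntegrable.smul_continuous hb.continuous hm)
  have h2N : LocallyIntegrable fun y ↦ 2 * ‖Dm y‖ := hDm.norm.smul (2 : ℝ)
  have hT : LocallyIntegrable fun y ↦ J y + 2 * ‖Dm y‖ + m y := (hJ.add h2N).add hm
  have hT0 : ∀ y, 0 ≤ J y + 2 * ‖Dm y‖ + m y := fun y ↦ by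
    have := hJ0 y; have := hm0 y; positivity
  set T := mollify σ volume (fun y ↦ J y + 2 * ‖Dm y‖ + m y) with hTd
  set τ := (Metric.closedBall (0 : EuclideanSpace ℝ (Fin l)) R).indicator
    (fun x ↦ r * K * T x) with hτd
  have hTC : Continuous T := hσ.continuous_mollify hT
  have hτi : Integrable τ :=
    ((continuous_const.mul hTC).locallyIntegrable.integrableOn_isCompact
      (isCompact_closedBall _ _)).integrable_indicator measurableSet_closedBall
  have hτ1 : ∫ x, τ x ≤ 1 := by
    rw [hτd, integral_indicator measurableSet_closedBall, integral_const_mul, mul_assoc]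
    refine le_trans ?_ hX
    gcongr
    exact hσ.setIntegral_mollify_le hr1 hT0 hT R
  have hτ : ∀ x, ‖gradient (fun x ↦ ψ x * φ (mollify σ volume m x)) x‖ *
      ‖mollify σ volume (fun x ↦ (1 / 2 : ℝ) • c x (Dm x) + m x • b x) x -
        ((1 / 2 : ℝ) • c x (gradient (mollify σ volume m) x) + mollify σ volume m x • b x)‖ ≤
      τ x := fun x ↦ by
    by_cases hx : x ∈ Metric.closedBall (0 : EuclideanSpace ℝ (Fin l)) R
    · rw [hτd, indicator_of_mem hx]
      refine le_trans ?_ (hφ.commutator_le (K := K) hσ hm hDm hm0 hJ hJ0 hle hr x)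
      have h1 := hφ.norm_gradient_mul_comp_le hψ hη hμC hμ0 x
      rw [hgr] at h1 ⊢
      exact mul_le_mul h1 (hc.norm_mollify_flux_sub_le hb hm hm0 hDm hσ x) (norm_nonneg _)
        ((norm_nonneg _).trans h1)
    · rw [gradient_eq_zero_of_notMem_tsupport fun hx' ↦ hx (hR (tsupport_mul_subset_left hx')),
        norm_zero, zero_mul]
      exact indicator_nonneg (fun y _ ↦ by have := hσ.mollify_nonneg hT0 y; positivity) x
  have hl := hφ.le_integral_inner_gradient hc hb hB hbB hψ hη hμC hμ0 hμi hμ1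
    (hσ.continuous_mollify hV) hτi hτ1 hτ
  have hq := hφ.integral_sq_norm_gradient_mul_le hψ hη hμC hμ0 hμi hμ1
  have hf := hc.mollified_functional_le hV hm hm0 hF hσ
    (hψ.contDiff.mul (hφ.contDiff_comp hμC hμ0)) hψ.hasCompactSupport.mul_right (θ ^ 2 / 4)
  rw [hgr] at hl hq
  have e : (θ ^ 2 / 4) ^ 2 / (2 * θ) = θ ^ 3 / 32 := by field_simp; norm_num
  rw [e] at hf
  have h1 := mul_le_mul_of_nonneg_left hl (by positivity : 0 ≤ θ ^ 2 / 4)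
  have h2 := mul_le_mul_of_nonneg_left hq (by positivity : 0 ≤ θ ^ 3 / 32)
  linarith

end MollifiedEnergyBound

section TruncatedLog

theorem isTruncatedLog {δ : ℝ} (h0 : 0 < δ) (h1 : δ < 1) :
    IsTruncatedLog (-Real.log δ) (fun r ↦ Real.log (r + δ) - Real.log (1 + δ * r))
      (fun r ↦ (1 - δ ^ 2) / ((r + δ) * (1 + δ * r)))
      (fun r ↦ δ⁻¹ * Real.log (1 + δ * r) - δ * Real.log (1 + δ⁻¹ * r)) where
  contDiffAt r hr := by
    have : 0 < r + δ := by positivity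
    have : 0 < 1 + δ * r := by positivity
    exact (ContDiffAt.log (by fun_prop) (by positivity)).sub
      (ContDiffAt.log (by fun_prop) (by positivity))
  contDiffAt_primitive r hr := by
    have : 0 < 1 + δ⁻¹ * r := by positivity
    have : 0 < 1 + δ * r := by positivity
    exact (contDiffAt_const.mul (ContDiffAt.log (by fun_prop) (by positivity))).sub
      (contDiffAt_const.mul (ContDiffAt.log (by fun_prop) (by positivity)))
  continuousAt r hr := by
    have : (r + δ) * (1 + δ * r) ≠ 0 := by positivity
    exact ContinuousAt.div (by fun_prop) (by fun_prop) this
  hasDerivAt r hr := by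
    have e1 : r + δ ≠ 0 := by positivity
    have e2 : 1 + δ * r ≠ 0 := by positivity
    refine ((((hasDerivAt_id r).add_const δ).log e1).sub
      ((((hasDerivAt_id r).const_mul δ).const_add 1).log e2)).congr_deriv ?_
    simp only [id_eq]
    field_simp
    ring
  hasDerivAt_primitive r hr := by
    have e1 : 1 + δ⁻¹ * r ≠ 0 := by positivity
    have e2 : 1 + δ * r ≠ 0 := by positivity
    have e3 : r + δ ≠ 0 := by positivity
    refine ((((((hasDerivAt_id r).const_mul δ).const_add 1).log e2).const_mul δ⁻¹).sub
      (((((hasDerivAt_id r).const_mul δ⁻¹).const_add 1).log e1).const_mul δ)).congr_deriv ?_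
    simp only [id_eq]
    have e4 : 1 + δ⁻¹ * r = (r + δ) / δ := by field_simp; ring
    rw [e4]
    field_simp
    ring
  nonneg r hr := by
    have : 0 ≤ 1 - δ ^ 2 := by nlinarith
    positivity
  mul_le_one r hr := by
    have e1 : 0 < (r + δ) * (1 + δ * r) := by positivity
    rw [mul_div_assoc', div_le_one e1]
    nlinarith [mul_nonneg hr (sq_nonneg δ), mul_nonneg h0.le (mul_nonneg hr hr)]
  abs_le r hr := by
    have e1 : 0 < r + δ := by positivity
    have e2 : 0 < 1 + δ * r := by positivity
    rw [abs_le, neg_neg]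
    constructor
    · rw [le_sub_iff_add_le, ← Real.log_mul h0.ne' e2.ne']
      exact Real.log_le_log (by positivity)
        (by nlinarith [mul_le_of_le_one_left hr (by nlinarith : δ * δ ≤ 1)])
    · rw [sub_le_iff_le_add, neg_add_eq_sub, le_sub_iff_add_le, ← Real.log_mul e1.ne' h0.ne']
      exact Real.log_le_log (by positivity) (by nlinarith)
  primitive_nonneg r hr := by
    have e1 : 0 < 1 + δ * r := by positivity
    have h2 : 1 ≤ (δ ^ 2)⁻¹ := (one_le_inv₀ (by positivity)).2 (by nlinarith)
    have h3 := one_add_mul_self_le_rpow_one_add (s := δ * r) (by nlinarith [mul_nonneg h0.le hr]) h2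
    have e2 : (δ ^ 2)⁻¹ * (δ * r) = δ⁻¹ * r := by field_simp
    rw [e2] at h3
    have h4 := Real.log_le_log (by positivity) h3
    rw [Real.log_rpow e1] at h4
    rw [sub_nonneg]
    calc _ ≤ δ * ((δ ^ 2)⁻¹ * Real.log (1 + δ * r)) := by gcongr
      _ = _ := by field_simp
  primitive_le r hr := by
    have h2 : Real.log (1 + δ * r) ≤ δ * r := by
      have := Real.log_le_sub_one_of_pos (by positivity : 0 < 1 + δ * r)
      linarith
    have h3 : 0 ≤ δ * Real.log (1 + δ⁻¹ * r) :=
      mul_nonneg h0.le (Real.log_nonneg (by linarith [mul_nonneg (inv_nonneg.2 h0.le) hr]))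
    have h4 : δ⁻¹ * Real.log (1 + δ * r) ≤ δ⁻¹ * (δ * r) := by gcongr
    rw [inv_mul_cancel_left₀ h0.ne'] at h4
    linarith

theorem tendsto_truncated_inv {δ r : ℕ → ℝ} {s : ℝ} (hδ : Tendsto δ atTop (𝓝 0))
    (hr : Tendsto r atTop (𝓝 s)) (hs : 0 < s) :
    Tendsto (fun n ↦ (1 - δ n ^ 2) / ((r n + δ n) * (1 + δ n * r n))) atTop (𝓝 s⁻¹) := by
  have h := Tendsto.div ((tendsto_const_nhds (x := (1 : ℝ))).sub (hδ.pow 2)) ((hr.add hδ).mul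
    ((tendsto_const_nhds (x := (1 : ℝ))).add (hδ.mul hr))) (by simpa using hs.ne')
  simpa [Pi.div_def] using h

end TruncatedLog

section LogarithmicCutoff

variable {E : Type*} [NormedAddCommGroup E] [InnerProductSpace ℝ E]

theorem norm_two_div_smul_mul_le (x : E) :
    ‖(2 / (1 + ‖x‖ ^ 2)) • x‖ * (1 + ‖x‖) ≤ 4 := by
  rw [norm_smul, Real.norm_of_nonneg (by positivity), div_mul_eq_mul_div, div_mul_eq_mul_div,
    div_le_iff₀ (by positivity)]
  nlinarith [sq_nonneg (‖x‖ - 1)]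

theorem norm_two_div_smul_le (x : E) : ‖(2 / (1 + ‖x‖ ^ 2)) • x‖ ≤ 1 := by
  rw [norm_smul, Real.norm_of_nonneg (by positivity), div_mul_eq_mul_div,
    div_le_iff₀ (by positivity)]
  nlinarith [sq_nonneg (‖x‖ - 1)]

theorem norm_two_div_smul_sub_le (x y : E) :
    ‖(2 / (1 + ‖x‖ ^ 2)) • x - (2 / (1 + ‖y‖ ^ 2)) • y‖ ≤ 4 * ‖x - y‖ := by
  have hx : 0 < 1 + ‖x‖ ^ 2 := by positivity
  have hy : 0 < 1 + ‖y‖ ^ 2 := by positivity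
  have e : (2 / (1 + ‖x‖ ^ 2)) • x - (2 / (1 + ‖y‖ ^ 2)) • y =
      (2 / ((1 + ‖x‖ ^ 2) * (1 + ‖y‖ ^ 2))) •
        ((1 + ‖y‖ ^ 2) • (x - y) + ((‖y‖ - ‖x‖) * (‖y‖ + ‖x‖)) • y) := by
    match_scalars <;> field_simp
    ring
  have h1 : |‖y‖ - ‖x‖| ≤ ‖x - y‖ := by
    rw [norm_sub_rev]
    exact abs_norm_sub_norm_le y x
  rw [e, norm_smul, Real.norm_of_nonneg (by positivity), div_mul_eq_mul_div,
    div_le_iff₀ (by positivity)]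
  calc _ ≤ 2 * ((1 + ‖y‖ ^ 2) * ‖x - y‖ + ‖x - y‖ * (‖y‖ + ‖x‖) * ‖y‖) := by
        gcongr
        refine (norm_add_le _ _).trans ?_
        rw [norm_smul, norm_smul, Real.norm_of_nonneg hy.le, norm_mul, Real.norm_eq_abs,
          Real.norm_of_nonneg (by positivity)]
        gcongr
    _ = ‖x - y‖ * (2 * (1 + ‖y‖ ^ 2 + (‖y‖ + ‖x‖) * ‖y‖)) := by ring
    _ ≤ ‖x - y‖ * (4 * ((1 + ‖x‖ ^ 2) * (1 + ‖y‖ ^ 2))) := by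
        refine mul_le_mul_of_nonneg_left ?_ (norm_nonneg _)
        nlinarith [sq_nonneg (‖x‖ * ‖y‖ - 1), sq_nonneg ‖x‖, sq_nonneg (‖x‖ * ‖y‖)]
    _ = _ := by ring

variable [CompleteSpace E]

theorem hasGradientAt_log_one_add_sq (x : E) :
    HasGradientAt (fun x : E ↦ Real.log (1 + ‖x‖ ^ 2)) ((2 / (1 + ‖x‖ ^ 2)) • x) x := by
  have h : HasGradientAt (fun x : E ↦ 1 + ‖x‖ ^ 2) ((2 : ℝ) • x) x := by
    rw [hasGradientAt_iff_hasFDerivAt]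
    refine ((hasStrictFDerivAt_norm_sq x).hasFDerivAt.const_add 1).congr_fderiv ?_
    ext y
    simp
  have := (Real.hasDerivAt_log (by positivity : 1 + ‖x‖ ^ 2 ≠ 0)).comp_hasGradientAt
    (f := fun x : E ↦ 1 + ‖x‖ ^ 2) h
  rwa [smul_smul, inv_mul_eq_div] at this

theorem abs_log_one_add_sq_sub_le (x y : E) :
    |Real.log (1 + ‖x‖ ^ 2) - Real.log (1 + ‖y‖ ^ 2)| ≤ ‖x - y‖ := by
  have h := Convex.norm_image_sub_le_of_norm_hasFDerivWithin_le (C := 1)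
    (fun z _ ↦ (hasGradientAt_iff_hasFDerivAt.1 (hasGradientAt_log_one_add_sq z)).hasFDerivWithinAt)
    (fun z _ ↦ by rw [LinearIsometryEquiv.norm_map]; exact norm_two_div_smul_le z)
    convex_univ (mem_univ y) (mem_univ x)
  rwa [one_mul] at h

theorem exists_isCutoff [FiniteDimensional ℝ E] {η : NNReal} (hη : 0 < η) (R : ℝ) :
    ∃ ψ : E → ℝ, IsCutoff η ψ ∧ ∀ x, ‖x‖ ≤ R → ψ x = 1 := by
  let χ : ContDiffBump (0 : ℝ) := ⟨1, 2, one_pos, one_lt_two⟩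
  have hχ : ContDiff ℝ 2 χ := χ.contDiff
  have hχ1 : ContDiff ℝ 1 (deriv χ) := (contDiff_succ_iff_deriv (n := 1).1 hχ).2.2
  have hχs : HasCompactSupport (deriv χ) := χ.hasCompactSupport.deriv
  obtain ⟨A, hA⟩ := hχ1.continuous.bounded_above_of_compact_support hχs
  obtain ⟨A', hA'⟩ := ContDiff.lipschitzWith_of_hasCompactSupport hχs hχ1 one_ne_zero
  have hA0 : 0 ≤ A := (norm_nonneg _).trans (hA 0)
  obtain ⟨κ, hκ0, hκ1, hκC, hκR⟩ : ∃ κ : ℝ, 0 < κ ∧ κ ≤ 1 ∧ κ * (A' + 4 * A) ≤ η ∧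
      κ * Real.log (1 + R ^ 2) ≤ 1 := by
    have hC : 0 < A' + 4 * A + 1 := by positivity
    have hL : 0 ≤ Real.log (1 + R ^ 2) := Real.log_nonneg (by nlinarith [sq_nonneg R])
    have hη' : (0 : ℝ) < η := hη
    refine ⟨min 1 (min (η / (A' + 4 * A + 1)) (1 / (Real.log (1 + R ^ 2) + 1))), by positivity,
      min_le_left _ _, ?_, ?_⟩
    · calc _ ≤ η / (A' + 4 * A + 1) * (A' + 4 * A + 1) := by
            refine mul_le_mul ((min_le_right _ _).trans (min_le_left _ _)) (by linarith)
              (by positivity) (by positivity)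
        _ = _ := div_mul_cancel₀ _ hC.ne'
    · calc _ ≤ 1 / (Real.log (1 + R ^ 2) + 1) * (Real.log (1 + R ^ 2) + 1) := by
            gcongr
            · exact (min_le_right _ _).trans (min_le_right _ _)
            · linarith
        _ = _ := div_mul_cancel₀ _ (by positivity)
  have hgr : ∀ x : E, HasGradientAt (fun x : E ↦ χ (κ * Real.log (1 + ‖x‖ ^ 2)))
      ((κ * deriv χ (κ * Real.log (1 + ‖x‖ ^ 2))) • (2 / (1 + ‖x‖ ^ 2)) • x) x := fun x ↦ by
    have h1 := ((hasDerivAt_id (Real.log (1 + ‖x‖ ^ 2))).const_mul κ)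
    have h2 := (hχ.differentiable two_ne_zero (κ * Real.log (1 + ‖x‖ ^ 2))).hasDerivAt
    have h3 := (h2.comp _ h1).comp_hasGradientAt
      (f := fun x : E ↦ Real.log (1 + ‖x‖ ^ 2)) (hasGradientAt_log_one_add_sq x)
    rwa [mul_one, mul_comm] at h3
  have hgr' := fun x ↦ (hgr x).gradient
  refine ⟨fun x ↦ χ (κ * Real.log (1 + ‖x‖ ^ 2)), ⟨?_, ?_, fun x ↦ χ.nonneg, fun x ↦ χ.le_one,
    fun x ↦ ?_, LipschitzWith.of_dist_le_mul fun x y ↦ ?_⟩, fun x hx ↦ ?_⟩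
  · refine (hχ.of_le one_le_two).comp (contDiff_const.mul (ContDiff.log
      (contDiff_const.add (contDiff_norm_sq ℝ)) fun x ↦ ?_))
    positivity
  · refine HasCompactSupport.intro (isCompact_closedBall 0 (Real.exp (2 / κ))) fun x hx ↦ ?_
    have hx' : Real.exp (2 / κ) < ‖x‖ := by simpa using hx
    have h1 : 1 ≤ Real.exp (2 / κ) := Real.one_le_exp (by positivity)
    have h2 : 2 / κ ≤ Real.log (1 + ‖x‖ ^ 2) := by
      rw [Real.le_log_iff_exp_le (by positivity)]
      nlinarith
    refine χ.zero_of_le_dist ?_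
    rw [div_le_iff₀' hκ0] at h2
    rw [dist_zero_right]
    exact h2.trans (le_abs_self _)
  · rw [hgr', norm_smul, norm_mul, Real.norm_of_nonneg hκ0.le, mul_assoc]
    calc _ ≤ κ * A * 4 := by
          gcongr
          · exact hA _
          · exact norm_two_div_smul_mul_le x
      _ ≤ κ * (A' + 4 * A) := by nlinarith [mul_nonneg hκ0.le A'.2]
      _ ≤ η := hκC
  · rw [hgr', hgr', dist_eq_norm, dist_eq_norm]
    set u := deriv χ (κ * Real.log (1 + ‖x‖ ^ 2)) with hu
    set v := deriv χ (κ * Real.log (1 + ‖y‖ ^ 2)) with hv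
    have h1 : ‖u - v‖ ≤ A' * ‖x - y‖ := by
      rw [← dist_eq_norm]
      refine (hA'.dist_le_mul _ _).trans ?_
      rw [Real.dist_eq, ← mul_sub, abs_mul, abs_of_pos hκ0]
      gcongr
      exact (mul_le_of_le_one_left (abs_nonneg _) hκ1).trans (abs_log_one_add_sq_sub_le x y)
    have e : (κ * u) • (2 / (1 + ‖x‖ ^ 2)) • x - (κ * v) • (2 / (1 + ‖y‖ ^ 2)) • y =
        κ • ((u - v) • (2 / (1 + ‖x‖ ^ 2)) • x +
          v • ((2 / (1 + ‖x‖ ^ 2)) • x - (2 / (1 + ‖y‖ ^ 2)) • y)) := by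
      module
    rw [e, norm_smul, Real.norm_of_nonneg hκ0.le]
    calc _ ≤ κ * (A' * ‖x - y‖ * 1 + A * (4 * ‖x - y‖)) := by
          gcongr
          refine (norm_add_le _ _).trans ?_
          rw [norm_smul, norm_smul v]
          gcongr
          · exact norm_two_div_smul_le x
          · exact hA _
          · exact norm_two_div_smul_sub_le x y
      _ = κ * (A' + 4 * A) * ‖x - y‖ := by ring
      _ ≤ _ := by gcongr
  · refine χ.one_of_mem_closedBall ?_
    have h1 : Real.log (1 + ‖x‖ ^ 2) ≤ Real.log (1 + R ^ 2) := by gcongr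
    have h0 : 0 ≤ Real.log (1 + ‖x‖ ^ 2) := Real.log_nonneg (by nlinarith [sq_nonneg ‖x‖])
    rw [mem_closedBall_zero_iff, Real.norm_of_nonneg (by positivity)]
    exact le_trans (by gcongr) hκR

end LogarithmicCutoff

section EnergyBound

variable {θ B F : ℝ} {K : NNReal} {m : EuclideanSpace ℝ (Fin l) → ℝ}
  {c : EuclideanSpace ℝ (Fin l) → EuclideanSpace ℝ (Fin l) →L[ℝ] EuclideanSpace ℝ (Fin l)}
  {b Dm : EuclideanSpace ℝ (Fin l) → EuclideanSpace ℝ (Fin l)}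

theorem IsEllipticField.lintegral_energy_le (hc : IsEllipticField θ K c)
    (hb : LipschitzWith K b) (hB : 0 ≤ B) (hbB : ∀ x, ‖b x‖ ≤ B * (1 + ‖x‖))
    (hw : HasWeakGrad m Dm) (hmm : Measurable m) (hm0 : ∀ x, 0 ≤ m x) (hm1 : ∫ x, m x = 1)
    (hJ : LocallyIntegrable fun x ↦ ‖Dm x‖ ^ 2 / m x)
    (hF : ∀ h : EuclideanSpace ℝ (Fin l) → ℝ, ContDiff ℝ 1 h → HasCompactSupport h →
      ∫ x, (⟪gradient h x, (1 / 2 : ℝ) • c x (Dm x) + m x • b x⟫ -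
        1 / 2 * ⟪c x (gradient h x), gradient h x⟫ * m x) ≤ F) :
    ∫⁻ x, ENNReal.ofReal (‖Dm x‖ ^ 2 / m x) ≤ ENNReal.ofReal (16 / θ ^ 3 *
      (F + (θ ^ 2 / 4 * (l * K + 1 / 2 * (l * (K + θ⁻¹)) + B + 1) + θ ^ 3 / 16))) := by
  have hθ := hc.pos
  have hJ0 : ∀ x, 0 ≤ ‖Dm x‖ ^ 2 / m x := fun x ↦ div_nonneg (sq_nonneg _) (hm0 x)
  have hle : ∀ᵐ x, ‖Dm x‖ ^ 2 ≤ ‖Dm x‖ ^ 2 / m x * m x := by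
    filter_upwards [hw.ae_eq_zero_of_eq_zero hm0 hmm] with x hx
    rcases eq_or_ne (m x) 0 with h | h
    · simp [hx h]
    · rw [div_mul_cancel₀ _ h]
  set δ : ℕ → ℝ := fun n ↦ ((n : ℝ) + 2)⁻¹ with hδ
  have hδ0 : ∀ n, 0 < δ n := fun n ↦ by positivity
  have hδ1 : ∀ n, δ n < 1 := fun n ↦ inv_lt_one_of_one_lt₀ (by
    have : (0 : ℝ) ≤ n := n.cast_nonneg
    linarith)
  have hδt : Tendsto δ atTop (𝓝 0) :=
    tendsto_inv_atTop_zero.comp (tendsto_atTop_add_const_right _ _ tendsto_natCast_atTop_atTop)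
  have hφ := fun n ↦ isTruncatedLog (hδ0 n) (hδ1 n)
  have hM : ∀ n, 0 < -Real.log (δ n) + 1 := fun n ↦ by linarith [(hφ n).bound_nonneg]
  choose ψ hψ hψ1 using fun n : ℕ ↦ exists_isCutoff (E := EuclideanSpace ℝ (Fin l))
    (η := Real.toNNReal (-Real.log (δ n) + 1)⁻¹) (by simpa using hM n) n
  have hη : ∀ n, (-Real.log (δ n) + 1) * (Real.toNNReal (-Real.log (δ n) + 1)⁻¹ : ℝ) ≤ 1 :=
    fun n ↦ by
      rw [Real.coe_toNNReal _ (inv_nonneg.2 (hM n).le), mul_inv_cancel₀ (hM n).ne']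
  choose R hR using fun n ↦ (hψ n).hasCompactSupport.isCompact.isBounded.subset_closedBall
    (0 : EuclideanSpace ℝ (Fin l))
  set X : ℕ → ℝ := fun n ↦ K * ∫ x in Metric.closedBall 0 (R n + 1),
    (‖Dm x‖ ^ 2 / m x + 2 * ‖Dm x‖ + m x) with hX
  have hX0 : ∀ n, 0 ≤ X n := fun n ↦ mul_nonneg K.2 (integral_nonneg fun x ↦ by
    have := hJ0 x; have := hm0 x; positivity)
  set r : ℕ → ℝ := fun n ↦ min (1 / ((n : ℝ) + 1)) (1 / (X n + 1)) with hr
  have hr0 : ∀ n, 0 < r n := fun n ↦ by have := hX0 n; positivity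
  have hrn : ∀ n, r n ≤ 1 / ((n : ℝ) + 1) := fun n ↦ min_le_left _ _
  have hr1 : ∀ n, r n ≤ 1 := fun n ↦ (hrn n).trans ((div_le_one (by positivity)).2 (by simp))
  have hrX : ∀ n, r n * X n ≤ 1 := fun n ↦ by
    have h0 := hX0 n
    calc _ ≤ 1 / (X n + 1) * (X n + 1) :=
          mul_le_mul (min_le_right _ _) (by linarith) h0 (by positivity)
      _ = 1 := div_mul_cancel₀ _ (by positivity)
  have hrt : Tendsto r atTop (𝓝 0) :=
    squeeze_zero (fun n ↦ (hr0 n).le) hrn tendsto_one_div_add_atTop_nhds_zero_nat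
  have hσ : ∀ n, IsMollifier ((halfBump (E := EuclideanSpace ℝ (Fin l)) (r n) (hr0 n)).normed
    volume) (r n) volume := fun n ↦ ContDiffBump.isMollifier_normed _
  set σ : ℕ → EuclideanSpace ℝ (Fin l) → ℝ := fun n ↦ (halfBump (r n) (hr0 n)).normed volume
    with hσd
  have hm0' := fun n ↦ (hσ n).mollify_nonneg hm0
  refine lintegral_ofReal_le_of_integral_le (h := fun n x ↦ ψ n x *
    ((1 - δ n ^ 2) / ((mollify (σ n) volume m x + δ n) * (1 + δ n * mollify (σ n) volume m x))) *
    ‖mollify (σ n) volume Dm x‖ ^ 2) (fun n ↦ ?_) (fun n x ↦ ?_) (fun n ↦ ?_) ?_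
  · rw [← hw.gradient_mollify (hσ n)]
    exact (hφ n).integrable_energy (hψ n) (((hσ n).contDiff_mollify hw.1).of_le (by simp)) (hm0' n)
  · exact mul_nonneg (mul_nonneg ((hψ n).nonneg x) ((hφ n).nonneg _ (hm0' n x))) (sq_nonneg _)
  · have := hc.mollified_energy_le hb hB hbB hw hm0 hm1 hJ hJ0 hle hF (hσ n) (hr0 n).le (hr1 n)
      (hφ n) (hψ n) (hη n) (hR n) (hrX n)
    rw [div_mul_eq_mul_div, le_div_iff₀' (by positivity)]
    linarith
  · filter_upwards [ae_tendsto_mollify hr0 hrt hw.1, ae_tendsto_mollify hr0 hrt hw.2.1]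
      with x hx1 hx2
    rcases (hm0 x).eq_or_lt with h | h
    · simp [← h]
    · right
      have hψt : Tendsto (fun n ↦ ψ n x) atTop (𝓝 1) := by
        refine tendsto_const_nhds.congr' ?_
        filter_upwards [eventually_ge_atTop ⌈‖x‖⌉₊] with n hn
        exact (hψ1 n x (Nat.ceil_le.1 hn)).symm
      have := (hψt.mul (tendsto_truncated_inv hδt hx1 h)).mul (hx2.norm.pow 2)
      rwa [one_mul, inv_mul_eq_div] at this

end EnergyBound

section FixedTime

theorem MeasureTheory.locallyIntegrable_of_lintegral_ball {E : Type*} [NormedAddCommGroup E]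
    [MeasurableSpace E] [OpensMeasurableSpace E] {ν : Measure E} {f : E → ℝ} (hf : Measurable f)
    (hf0 : ∀ x, 0 ≤ f x) (h : ∀ n : ℕ, ∫⁻ x in Metric.ball 0 n, ENNReal.ofReal (f x) ∂ν < ⊤) :
    LocallyIntegrable f ν := fun x ↦ by
  obtain ⟨n, hn⟩ := exists_nat_gt ‖x‖
  refine ⟨Metric.ball 0 n, Metric.isOpen_ball.mem_nhds (by simpa using hn),
    hf.aestronglyMeasurable, ?_⟩
  rw [hasFiniteIntegral_iff_ofReal (Eventually.of_forall hf0)]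
  exact h n

variable {θ Kc Ka Ca : ℝ} {m : EuclideanSpace ℝ (Fin l) → ℝ}
  {c : EuclideanSpace ℝ (Fin l) → EuclideanSpace ℝ (Fin l) →L[ℝ] EuclideanSpace ℝ (Fin l)}
  {a Dm : EuclideanSpace ℝ (Fin l) → EuclideanSpace ℝ (Fin l)}

theorem lipschitzWith_drift (hc2 : LipschitzWith (Real.toNNReal Kc) (fderiv ℝ c))
    (ha : LipschitzWith (Real.toNNReal Ka) a) :
    LipschitzWith (l * Real.toNNReal Kc + Real.toNNReal Ka)
      fun x ↦ (1 / 2 : ℝ) • matDiv c x - a x := by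
  refine LipschitzWith.of_dist_le_mul fun x y ↦ ?_
  have h1 := (lipschitzWith_matDiv hc2).dist_le_mul x y
  have h2 := ha.dist_le_mul x y
  rw [dist_eq_norm] at h1 h2 ⊢
  rw [sub_sub_sub_comm, ← smul_sub]
  refine (norm_sub_le _ _).trans ?_
  rw [NNReal.coe_add, add_mul]
  refine add_le_add (le_trans ?_ h1) h2
  rw [norm_smul]
  refine mul_le_of_le_one_left (norm_nonneg _) ?_
  norm_num

theorem norm_drift_le (hKc : 0 ≤ Kc) (hKa : 0 ≤ Ka) (hCa : 0 ≤ Ca)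
    (hc1 : ∀ x, ‖fderiv ℝ c x‖ ≤ Kc) (ha : LipschitzWith (Real.toNNReal Ka) a) (ha0 : ‖a 0‖ ≤ Ca)
    (x : EuclideanSpace ℝ (Fin l)) :
    ‖(1 / 2 : ℝ) • matDiv c x - a x‖ ≤ (l * Kc + Ka + Ca) * (1 + ‖x‖) := by
  have h1 := norm_matDiv_le hc1 x
  have h2 := ha.dist_le_mul x 0
  rw [dist_eq_norm, dist_zero_right, Real.coe_toNNReal _ hKa] at h2
  have h3 : ‖a x‖ ≤ Ka * ‖x‖ + Ca := by
    have := norm_add_le (a x - a 0) (a 0)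
    rw [sub_add_cancel] at this
    linarith
  have h4 : ‖(1 / 2 : ℝ) • matDiv c x‖ ≤ l * Kc := by
    refine le_trans ?_ h1
    rw [norm_smul]
    refine mul_le_of_le_one_left (norm_nonneg _) ?_
    norm_num
  have hx := norm_nonneg x
  have h5 := mul_nonneg (mul_nonneg (Nat.cast_nonneg (α := ℝ) l) hKc) hx
  refine (norm_sub_le _ _).trans ?_
  nlinarith [mul_nonneg hCa hx]

/-- The additive constant in the energy bound. -/
noncomputable def energyConst (l : ℕ) (θ Kc Ka Ca : ℝ) : ℝ :=
  θ ^ 2 / 4 * (l * (Kc + (l * Kc + Ka)) + 1 / 2 * (l * (Kc + (l * Kc + Ka) + θ⁻¹)) +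
    (l * Kc + Ka + Ca) + 1) + θ ^ 3 / 16

theorem energyConst_nonneg (hθ : 0 < θ) (hKc : 0 ≤ Kc) (hKa : 0 ≤ Ka) (hCa : 0 ≤ Ca) :
    0 ≤ energyConst l θ Kc Ka Ca := by
  rw [energyConst]
  positivity

theorem lintegral_energy_le_iSup (hθ : 0 < θ) (hKc : 0 ≤ Kc) (hKa : 0 ≤ Ka) (hCa : 0 ≤ Ca)
    (hcs : ∀ x y y', ⟪c x y, y'⟫ = ⟪y, c x y'⟫)
    (hce : ∀ x y, θ * ‖y‖ ^ 2 ≤ ⟪c x y, y⟫ ∧ ⟪c x y, y⟫ ≤ θ⁻¹ * ‖y‖ ^ 2)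
    (hc : ContDiff ℝ 1 c) (hc1 : ∀ x, ‖fderiv ℝ c x‖ ≤ Kc)
    (hc2 : LipschitzWith (Real.toNNReal Kc) (fderiv ℝ c))
    (ha : LipschitzWith (Real.toNNReal Ka) a) (ha0 : ‖a 0‖ ≤ Ca)
    (hw : HasWeakGrad m Dm) (hmm : Measurable m) (hDm : Measurable Dm)
    (hm0 : ∀ x, 0 ≤ m x) (hm1 : ∫ x, m x = 1)
    (hJ : ∀ n : ℕ, ∫⁻ x in Metric.ball 0 n, ENNReal.ofReal (‖Dm x‖ ^ 2 / m x) < ⊤) :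
    ∫⁻ x, ENNReal.ofReal (‖Dm x‖ ^ 2 / m x) ≤
      ENNReal.ofReal (16 / θ ^ 3) *
        (⨆ h : {h : EuclideanSpace ℝ (Fin l) → ℝ // ContDiff ℝ 1 h ∧ HasCompactSupport h},
          ENNReal.ofReal (∫ x, (⟪gradient h.1 x,
            ((1 : ℝ) / 2) • (m x • matDiv c x + (c x) (Dm x)) - m x • a x⟫ -
              (1 / 2) * ⟪(c x) (gradient h.1 x), gradient h.1 x⟫ * m x))) +
      ENNReal.ofReal (16 / θ ^ 3 * energyConst l θ Kc Ka Ca) := by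
  set G := ⨆ h : {h : EuclideanSpace ℝ (Fin l) → ℝ // ContDiff ℝ 1 h ∧ HasCompactSupport h},
    ENNReal.ofReal (∫ x, (⟪gradient h.1 x,
      ((1 : ℝ) / 2) • (m x • matDiv c x + (c x) (Dm x)) - m x • a x⟫ -
        (1 / 2) * ⟪(c x) (gradient h.1 x), gradient h.1 x⟫ * m x)) with hG
  have hθ' : 0 < 16 / θ ^ 3 := by positivity
  rcases eq_or_ne G ⊤ with hGt | hGt
  · rw [hGt, ENNReal.mul_top (by simpa using hθ'), top_add]
    exact le_top
  set K : NNReal := Real.toNNReal Kc + (l * Real.toNNReal Kc + Real.toNNReal Ka) with hK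
  have hcl : LipschitzWith (Real.toNNReal Kc) c :=
    lipschitzWith_of_nnnorm_fderiv_le (hc.differentiable one_ne_zero) fun x ↦ by
      rw [← NNReal.coe_le_coe, Real.coe_toNNReal _ hKc]
      exact hc1 x
  have hell : IsEllipticField θ K c :=
    ⟨hθ, hcs, fun x y ↦ (hce x y).1, fun x y ↦ (hce x y).2, hcl.weaken (by simp [hK])⟩
  have hflux : ∀ x, ((1 : ℝ) / 2) • (m x • matDiv c x + (c x) (Dm x)) - m x • a x =
      (1 / 2 : ℝ) • c x (Dm x) + m x • ((1 / 2 : ℝ) • matDiv c x - a x) := fun x ↦ by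
    module
  have key := hell.lintegral_energy_le (F := G.toReal)
    ((lipschitzWith_drift hc2 ha).weaken (by simp [hK])) (by positivity)
    (norm_drift_le hKc hKa hCa hc1 ha ha0) hw hmm hm0 hm1
    (locallyIntegrable_of_lintegral_ball ((hDm.norm.pow_const 2).div hmm)
      (fun x ↦ div_nonneg (sq_nonneg _) (hm0 x)) hJ) fun h hh hh' ↦ by
        have := le_iSup (fun h : {h : EuclideanSpace ℝ (Fin l) → ℝ //
          ContDiff ℝ 1 h ∧ HasCompactSupport h} ↦ ENNReal.ofReal (∫ x, (⟪gradient h.1 x,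
            ((1 : ℝ) / 2) • (m x • matDiv c x + (c x) (Dm x)) - m x • a x⟫ -
              (1 / 2) * ⟪(c x) (gradient h.1 x), gradient h.1 x⟫ * m x))) ⟨h, hh, hh'⟩
        simp only [hflux] at this hG
        rw [← hG] at this
        exact (ENNReal.ofReal_le_iff_le_toReal hGt).1 this
  refine key.trans_eq ?_
  have e : (K : ℝ) = Kc + (l * Kc + Ka) := by
    rw [hK]
    push_cast
    rw [Real.coe_toNNReal _ hKc, Real.coe_toNNReal _ hKa]
  rw [e, ← energyConst, mul_add, ENNReal.ofReal_add (by positivity)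
    (mul_nonneg hθ'.le (energyConst_nonneg hθ hKc hKa hCa)), ENNReal.ofReal_mul hθ'.le,
    ENNReal.ofReal_toReal hGt]

end FixedTime

/-- Lemma `le:kwadr_int` of the paper: if the Fisher-information-type variational
functional is bounded by `L₁`, the local integrability of `|Dm|²/m` upgrades to a global
bound `L₂` depending only on `L₁`, `t`, the ellipticity constant `θ` and the bounds and
Lipschitz constants `Kc`, `Ka`, `Ca` of the coefficients. -/
theorem global_energy_bound
    (l : ℕ) (t θ L₁ Kc Ka Ca : ℝ)
    (ht : 0 < t) (hθ0 : 0 < θ) (hθ1 : θ ≤ 1) (hL₁ : 0 < L₁)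
    (hKc : 0 ≤ Kc) (hKa : 0 ≤ Ka) (hCa : 0 ≤ Ca) :
    ∃ L₂ : ℝ, 0 < L₂ ∧
      ∀ (c : ℝ → EuclideanSpace ℝ (Fin l) →
            (EuclideanSpace ℝ (Fin l) →L[ℝ] EuclideanSpace ℝ (Fin l)))
        (a : ℝ → EuclideanSpace ℝ (Fin l) → EuclideanSpace ℝ (Fin l))
        (m : ℝ → EuclideanSpace ℝ (Fin l) → ℝ)
        (Dm : ℝ → EuclideanSpace ℝ (Fin l) → EuclideanSpace ℝ (Fin l)),
        -- measurability of the coefficients and of the density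
        (∀ y, Measurable (fun p : ℝ × EuclideanSpace ℝ (Fin l) => (c p.1 p.2) y)) →
        (Measurable (fun p : ℝ × EuclideanSpace ℝ (Fin l) => a p.1 p.2)) →
        (Measurable (fun p : ℝ × EuclideanSpace ℝ (Fin l) => m p.1 p.2)) →
        (Measurable (fun p : ℝ × EuclideanSpace ℝ (Fin l) => Dm p.1 p.2)) →
        -- symmetry and uniform ellipticity of `c`
        (∀ s ∈ Set.Icc (0 : ℝ) t, ∀ x y y', ⟪c s x y, y'⟫ = ⟪y, c s x y'⟫) →
        (∀ s ∈ Set.Icc (0 : ℝ) t, ∀ x y,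
          θ * ‖y‖ ^ 2 ≤ ⟪c s x y, y⟫ ∧ ⟪c s x y, y⟫ ≤ θ⁻¹ * ‖y‖ ^ 2) →
        -- `c_s` of class `C¹` with first derivatives bounded and Lipschitz uniformly in `s`
        (∀ s ∈ Set.Icc (0 : ℝ) t, ContDiff ℝ 1 (c s)) →
        (∀ s ∈ Set.Icc (0 : ℝ) t, ∀ x, ‖fderiv ℝ (c s) x‖ ≤ Kc) →
        (∀ s ∈ Set.Icc (0 : ℝ) t, LipschitzWith (Real.toNNReal Kc) (fderiv ℝ (c s))) →
        -- `a_s` Lipschitz uniformly in `s`, with `sup_s |a_s(0)| < ∞`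
        (∀ s ∈ Set.Icc (0 : ℝ) t, LipschitzWith (Real.toNNReal Ka) (a s)) →
        (∀ s ∈ Set.Icc (0 : ℝ) t, ‖a s 0‖ ≤ Ca) →
        -- `m_s` a probability density of class `W^{1,1}_loc` for a.e. `s`
        (∀ᵐ s ∂(volume.restrict (Set.Icc (0 : ℝ) t)),
          (∀ x, 0 ≤ m s x) ∧ (∫ x, m s x) = 1 ∧ HasWeakGrad (m s) (Dm s)) →
        -- local square integrability of `Dm/√m`
        (∀ (x₀ : EuclideanSpace ℝ (Fin l)) (r : ℝ),
          (∫⁻ s in Set.Icc (0 : ℝ) t,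
            ∫⁻ x in Metric.ball x₀ r, ENNReal.ofReal (‖Dm s x‖ ^ 2 / m s x)) < ⊤) →
        -- the variational functional is bounded by `L₁`
        ((∫⁻ s in Set.Icc (0 : ℝ) t,
          ⨆ h : {h : EuclideanSpace ℝ (Fin l) → ℝ //
              ContDiff ℝ 1 h ∧ HasCompactSupport h},
            ENNReal.ofReal (∫ x,
              (⟪gradient h.1 x,
                  ((1 : ℝ) / 2) • (m s x • matDiv (c s) x + (c s x) (Dm s x)) -
                    m s x • a s x⟫ -
                (1 / 2) * ⟪(c s x) (gradient h.1 x), gradient h.1 x⟫ * m s x))) ≤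
          ENNReal.ofReal L₁) →
        (∫⁻ s in Set.Icc (0 : ℝ) t,
          ∫⁻ x, ENNReal.ofReal (‖Dm s x‖ ^ 2 / m s x)) ≤ ENNReal.ofReal L₂ := by
  have hC := energyConst_nonneg (l := l) hθ0 hKc hKa hCa
  have hθ3 : 0 < 16 / θ ^ 3 := by positivity
  refine ⟨16 / θ ^ 3 * L₁ + 16 / θ ^ 3 * energyConst l θ Kc Ka Ca * t, by positivity, ?_⟩
  intro c a m Dm _ _ hm hDm hcs hce hc hc1 hc2 ha ha0 hmw hJ hL
  have hJm : Measurable fun p : ℝ × EuclideanSpace ℝ (Fin l) ↦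
      ENNReal.ofReal (‖Dm p.1 p.2‖ ^ 2 / m p.1 p.2) :=
    ((hDm.norm.pow_const 2).div hm).ennreal_ofReal
  have hfin : ∀ᵐ s ∂(volume.restrict (Set.Icc (0 : ℝ) t)), ∀ n : ℕ,
      ∫⁻ x in Metric.ball 0 n, ENNReal.ofReal (‖Dm s x‖ ^ 2 / m s x) < ⊤ :=
    ae_all_iff.2 fun n ↦ ae_lt_top hJm.lintegral_prod_right' (hJ 0 n).ne
  have key := lintegral_mono_ae (μ := volume.restrict (Set.Icc (0 : ℝ) t))
    (f := fun s ↦ ∫⁻ x, ENNReal.ofReal (‖Dm s x‖ ^ 2 / m s x)) <| by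
      filter_upwards [hmw, hfin, ae_restrict_mem measurableSet_Icc] with s hs hfs hst
      exact lintegral_energy_le_iSup hθ0 hKc hKa hCa (hcs s hst) (hce s hst) (hc s hst)
        (hc1 s hst) (hc2 s hst) (ha s hst) (ha0 s hst) hs.2.2
        (hm.comp measurable_prodMk_left) (hDm.comp measurable_prodMk_left) hs.1 hs.2.1 hfs
  refine key.trans ?_
  rw [lintegral_add_right _ measurable_const, lintegral_const_mul' _ _ ENNReal.ofReal_ne_top,
    lintegral_const, Measure.restrict_apply_univ, Real.volume_Icc, sub_zero,
    ENNReal.ofReal_add (by positivity) (by positivity), ENNReal.ofReal_mul (q := L₁) hθ3.le,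
    ENNReal.ofReal_mul (q := t) (by positivity)]
  gcongr
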